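/- Let X be a standard Borel space, E a countable Borel equivalence relation on X, ρ : E → (0,∞) a Borel cocycle, and A ⊆ X an E-complete Borel set. Then X is the union of: an E-invariant Borel set B for which the restriction of ρ to E restricted to B is smooth; an E-invariant Borel set C for which A ∩ C has σ-positive (ρ restricted to E|C)-density; and an E-invariant Borel set D for which there is a finite-to-one Borel compression of the quotient of ρ restricted to E|D by a finite Borel subequivalence relation of E|D. -/

import Mathlib

open MeasureTheory Set ENNReal

namespace CocycleNadkarni

variable {X : Type*} {Γ : Type*}

/-- The `ρ`-size of `Y` relative to the point `z`: `∑_{y ∈ Y} ρ(y, z)`. -/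
noncomputable def eSize (ρ : X → X → ℝ) (Y : Set X) (z : X) : ℝ≥0∞ :=
  ∑' y : Y, ENNReal.ofReal (ρ y z)

/-- The `ρ`-size of `Y` relative to the set `Z`, computed at the point `z`. -/
noncomputable def relSize (ρ : X → X → ℝ) (Y Z : Set X) (z : X) : ℝ≥0∞ :=
  eSize ρ Y z / eSize ρ Z z

/-- Real-valued `ρ`-size (used for finite sets). -/
noncomputable def rSize (ρ : X → X → ℝ) (Y : Set X) (z : X) : ℝ :=
  ∑' y : Y, ρ y z

/-- `∫_C f dμ^ρ_S`, computed at the point `z`. -/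
noncomputable def avgOn (ρ : X → X → ℝ) (f : X → ℝ) (S C : Set X) (z : X) : ℝ :=
  (∑' y : ↥(S ∩ C), f y * ρ y z) / rSize ρ S z

/-- countable Borel equivalence relation -/
def IsCBER [MeasurableSpace X] (E : X → X → Prop) : Prop :=
  Equivalence E ∧ MeasurableSet {p : X × X | E p.1 p.2} ∧ ∀ x : X, {y | E x y}.Countable

/-- Borel cocycle `ρ : E → (0, ∞)` (as a total function whose values off `E` are irrelevant). -/
def IsCocycle [MeasurableSpace X] (E : X → X → Prop) (ρ : X → X → ℝ) : Prop :=
  Measurable (fun p : X × X => ρ p.1 p.2) ∧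
    (∀ ⦃x y : X⦄, E x y → 0 < ρ x y) ∧
    ∀ ⦃x y z : X⦄, E x y → E y z → ρ x z = ρ x y * ρ y z

/-- Borel cocycle into a group `Γ`. -/
def IsGrpCocycle [MeasurableSpace X] [Group Γ] [MeasurableSpace Γ]
    (E : X → X → Prop) (ρ : X → X → Γ) : Prop :=
  Measurable (fun p : X × X => ρ p.1 p.2) ∧
    ∀ ⦃x y z : X⦄, E x y → E y z → ρ x z = ρ x y * ρ y z

/-- finite Borel subequivalence relation of `E` -/
def IsFinSubequiv [MeasurableSpace X] (E F : X → X → Prop) : Prop :=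
  Equivalence F ∧ MeasurableSet {p : X × X | F p.1 p.2} ∧
    (∀ ⦃x y : X⦄, F x y → E x y) ∧ ∀ x : X, {y | F x y}.Finite

/-- finite Borel subequivalence relation of `E` restricted to `W` (extended by the diagonal). -/
def IsFinSubequivOn [MeasurableSpace X] (E : X → X → Prop) (W : Set X)
    (F : X → X → Prop) : Prop :=
  Equivalence F ∧ MeasurableSet {p : X × X | F p.1 p.2} ∧
    (∀ ⦃x y : X⦄, F x y → x = y ∨ (E x y ∧ x ∈ W ∧ y ∈ W)) ∧ ∀ x : X, {y | F x y}.Finite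

/-- `ρ`-invariance of a Borel measure. -/
def IsInvariant [MeasurableSpace X] (E : X → X → Prop) (ρ : X → X → ℝ)
    (μ : Measure X) : Prop :=
  ∀ T : X ≃ᵐ X, (∀ x, E (T x) x) → ∀ B : Set X, MeasurableSet B →
    μ (T '' B) = ∫⁻ x in B, ENNReal.ofReal (ρ (T x) x) ∂μ

/-- invariance w.r.t. the restriction of `ρ` to a set `R` of pairs, via Borel injections
whose graphs are contained in `R⁻¹`. -/
def IsInvariantRel [MeasurableSpace X] (R : Set (X × X)) (ρ : X → X → ℝ)
    (μ : Measure X) : Prop :=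
  ∀ (B : Set X) (T : X → X), MeasurableSet B → Measurable T → Set.InjOn T B →
    (∀ x ∈ B, ((T x, x) : X × X) ∈ R) →
    μ (T '' B) = ∫⁻ x in B, ENNReal.ofReal (ρ (T x) x) ∂μ

/-- a Borel ℕ-coloring of the lacunarity digraph `G^ρ_Z`. -/
def HasColoring [MeasurableSpace X] (E : X → X → Prop) (ρ : X → X → Γ)
    (Z : Set Γ) : Prop :=
  ∃ c : X → ℕ, Measurable c ∧
    ∀ ⦃x y : X⦄, x ≠ y → E x y → ρ x y ∈ Z → c x ≠ c y

/-- smoothness of the cocycle `ρ` restricted to `E` restricted to `W`. -/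
def SmoothOn [MeasurableSpace X] (E : X → X → Prop) (ρ : X → X → ℝ)
    (W : Set X) : Prop :=
  ∃ U : Set ℝ, IsOpen U ∧ (1:ℝ) ∈ U ∧ U ⊆ Set.Ioi 0 ∧
    ∃ c : X → ℕ, Measurable c ∧
      ∀ ⦃x y : X⦄, x ∈ W → y ∈ W → x ≠ y → E x y → ρ x y ∈ U → c x ≠ c y

/-- smoothness of the cocycle `ρ` on `E`. -/
def Smooth [MeasurableSpace X] (E : X → X → Prop) (ρ : X → X → ℝ) : Prop :=
  SmoothOn E ρ Set.univ

/-- `E`-invariance of a set. -/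
def EInvariant (E : X → X → Prop) (B : Set X) : Prop :=
  ∀ ⦃x y : X⦄, E x y → x ∈ B → y ∈ B

/-- a compression of `ρ` over the finite subequivalence relation `F` of `E`. -/
def CompressionOver [MeasurableSpace X] (E F : X → X → Prop) (ρ : X → X → ℝ)
    (φ : X → X) : Prop :=
  (∀ x, E x (φ x)) ∧
  (∀ x : X, relSize ρ (φ ⁻¹' {y | F y x}) {y | F y x} x ≤ 1) ∧
  (∀ x : X, ∃ y, E x y ∧ relSize ρ (φ ⁻¹' {z | F z y}) {z | F z y} y < 1)

/-- a compression of the quotient of `ρ | E | W` by the finite subequivalence relation given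
by the setoid `s`, expressed via representatives. -/
def QuotCompressionOn [MeasurableSpace X] (E : X → X → Prop) (ρ : X → X → ℝ)
    (W : Set X) (s : Setoid X) (φ : Quotient s → Quotient s) : Prop :=
  (∀ ⦃x : X⦄, x ∈ W → ∀ y : X, φ (Quotient.mk s x) = Quotient.mk s y → (E x y ∧ y ∈ W)) ∧
  (∀ ⦃x : X⦄, x ∈ W →
    relSize ρ {y | y ∈ W ∧ φ (Quotient.mk s y) = Quotient.mk s x} {y | s.r y x} x ≤ 1) ∧
  (∀ ⦃x : X⦄, x ∈ W → ∃ y, y ∈ W ∧ E x y ∧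
    relSize ρ {z | z ∈ W ∧ φ (Quotient.mk s z) = Quotient.mk s y} {z | s.r z y} y < 1)


/-- `B` has `ρ`-density at least `ε` relative to `W`. -/
def HasDensityAtLeastOn [MeasurableSpace X] (E : X → X → Prop) (ρ : X → X → ℝ)
    (B W : Set X) (ε : ℝ) : Prop :=
  ∃ F : X → X → Prop, IsFinSubequivOn E W F ∧
    ∀ x ∈ W, ENNReal.ofReal ε ≤ relSize ρ (B ∩ {y | F y x}) {y | F y x} x

/-- `B` has positive `ρ`-density relative to `W`. -/
def HasPosDensityOn [MeasurableSpace X] (E : X → X → Prop) (ρ : X → X → ℝ)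
    (B W : Set X) : Prop :=
  ∃ ε : ℝ, 0 < ε ∧ HasDensityAtLeastOn E ρ B W ε

/-- `B` has σ-positive `ρ`-density relative to `W`. -/
def HasSigmaPosDensityOn [MeasurableSpace X] (E : X → X → Prop) (ρ : X → X → ℝ)
    (B W : Set X) : Prop :=
  ∃ A : ℕ → Set X, (∀ n, MeasurableSet (A n)) ∧ (∀ n, A n ⊆ W) ∧
    (∀ n, ∀ x ∈ A n, ∀ y ∈ W, E x y → y ∈ A n) ∧ W = ⋃ n, A n ∧
    ∀ n, HasPosDensityOn E ρ (B ∩ A n) (A n)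



/-! ### Lusin–Novikov -/
section LN

open TopologicalSpace Function Filter Topology

theorem ln_reflect {Z Y : Type*} [TopologicalSpace Z] [PolishSpace Z] [MeasurableSpace Z]
    [BorelSpace Z] [TopologicalSpace Y] [PolishSpace Y] [MeasurableSpace Y] [BorelSpace Y]
    {f : Z → Y} (hf : Continuous f) {K : Set Z} (hK : AnalyticSet K) (hi : InjOn f K) :
    ∃ G : Set Z, MeasurableSet G ∧ InjOn f G ∧ K ⊆ G := by
  have hsep : ∀ p : countableBasis Z × countableBasis Z,
      ∃ M : Set Y, MeasurableSet M ∧ (Disjoint (p.1 : Set Z) (p.2 : Set Z) →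
        f '' (K ∩ p.1) ⊆ M ∧ Disjoint (f '' (K ∩ p.2)) M) := by
    intro p
    by_cases hd : Disjoint (p.1 : Set Z) (p.2 : Set Z)
    · have an : ∀ q : countableBasis Z, AnalyticSet (f '' (K ∩ q)) := by
        intro q
        have hq : AnalyticSet (q : Set Z) :=
          ((isBasis_countableBasis Z).isOpen q.2).measurableSet.analyticSet
        have : AnalyticSet (K ∩ q) := by
          have h2 : K ∩ (q : Set Z) = ⋂ b : Bool, cond b K (q : Set Z) := by
            ext z; simp [and_comm]
          rw [h2]
          exact AnalyticSet.iInter (by rintro (_ | _) <;> simp [hq, hK])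
        exact this.image_of_continuous hf
      have hdis : Disjoint (f '' (K ∩ p.1)) (f '' (K ∩ p.2)) := by
        rw [Set.disjoint_left]
        rintro _ ⟨z, ⟨hz, hz1⟩, rfl⟩ ⟨z', ⟨hz', hz2⟩, he⟩
        have := hi hz' hz he
        subst this
        exact Set.disjoint_left.1 hd hz1 hz2
      obtain ⟨M, h1, h2, h3⟩ := (an p.1).measurablySeparable (an p.2) hdis
      exact ⟨M, h3, fun _ => ⟨h1, h2⟩⟩
    · exact ⟨∅, MeasurableSet.empty, fun h => absurd h hd⟩
  choose M hM hM2 using hsep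
  refine ⟨{z | ∀ p : countableBasis Z × countableBasis Z, Disjoint (p.1 : Set Z) (p.2 : Set Z) →
      (z ∈ (p.1 : Set Z) → f z ∈ M p) ∧ (z ∈ (p.2 : Set Z) → f z ∉ M p)}, ?_, ?_, ?_⟩
  · rw [Set.ofPred_forall]
    refine MeasurableSet.iInter fun p => ?_
    have hb : ∀ q : countableBasis Z, MeasurableSet {z : Z | z ∈ (q : Set Z)} := fun q =>
      ((isBasis_countableBasis Z).isOpen q.2).measurableSet
    have hm : MeasurableSet {z | f z ∈ M p} := hf.measurable (hM p)
    refine (MeasurableSet.const _).imp ?_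
    exact ((hb p.1).imp hm).inter ((hb p.2).imp hm.compl)
  · intro z hz z' hz' he
    by_contra hne
    obtain ⟨U, V, hU, hV, hzU, hzV, hd⟩ := t2_separation hne
    obtain ⟨u, hu, hzu, huU⟩ := (isBasis_countableBasis Z).exists_subset_of_mem_open hzU hU
    obtain ⟨v, hv, hzv, hvV⟩ := (isBasis_countableBasis Z).exists_subset_of_mem_open hzV hV
    have hd' : Disjoint u v := hd.mono huU hvV
    have h1 := (hz (⟨u, hu⟩, ⟨v, hv⟩) hd').1 hzu
    have h2 := (hz' (⟨u, hu⟩, ⟨v, hv⟩) hd').2 hzv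
    rw [he] at h1
    exact h2 h1
  · intro z hz p hd
    refine ⟨fun h => (hM2 p hd).1 ⟨z, ⟨hz, h⟩, rfl⟩, fun h h' => ?_⟩
    exact Set.disjoint_left.1 (hM2 p hd).2 ⟨z, ⟨hz, h⟩, rfl⟩ h'

def LNGood {Z Y κ : Type*} [MeasurableSpace Z] (f : Z → Y) (s : Set κ) (u : κ → Set Z) : Prop :=
  ∃ 𝒢 : Set (Set Z), 𝒢.Countable ∧ (∀ G ∈ 𝒢, MeasurableSet G ∧ InjOn f G) ∧
    ∀ z : κ → Z, (∀ i ∈ s, z i ∈ u i) → (∀ i ∈ s, ∀ j ∈ s, f (z i) = f (z j)) →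
      ∃ i ∈ s, ∃ G ∈ 𝒢, z i ∈ G

theorem ln_split {Z Y κ : Type*} [Countable κ] [DecidableEq κ] [MetricSpace Z] [CompleteSpace Z]
    [SecondCountableTopology Z] [MeasurableSpace Z]
    [BorelSpace Z] [TopologicalSpace Y] [PolishSpace Y] [MeasurableSpace Y] [BorelSpace Y]
    {f : Z → Y} (hf : Continuous f) {s : Set κ} {v : κ → Set Z} {a b : κ} (ha : a ∈ s) (hb : b ∈ s)
    (hab : a ≠ b) (hv : ∀ i ∈ s, IsOpen (v i)) (hvab : v a = v b) (hng : ¬ LNGood f s v)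
    {ε : ℝ} (hε : 0 < ε) :
    ∃ V W : Set Z, IsOpen V ∧ IsOpen W ∧ closure V ⊆ v a ∧ closure W ⊆ v a ∧ Disjoint V W ∧
      (∃ c, V ⊆ Metric.closedBall c ε) ∧ (∃ c, W ⊆ Metric.closedBall c ε) ∧
      ¬ LNGood f s (update (update v a V) b W) := by
  have hBo : ∀ q ∈ countableBasis Z, IsOpen q := fun q hq => (isBasis_countableBasis Z).isOpen hq
  by_contra hcon
  have hall : ∀ p : countableBasis Z × countableBasis Z,
      ∃ 𝒢 : Set (Set Z), 𝒢.Countable ∧ (∀ G ∈ 𝒢, MeasurableSet G ∧ InjOn f G) ∧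
      ((closure p.1.1 ⊆ v a ∧ closure p.2.1 ⊆ v a ∧ Disjoint p.1.1 p.2.1 ∧
      (∃ c, p.1.1 ⊆ Metric.closedBall c ε) ∧ (∃ c, p.2.1 ⊆ Metric.closedBall c ε)) →
      ∀ z : κ → Z, (∀ i ∈ s, z i ∈ update (update v a p.1.1) b p.2.1 i) →
        (∀ i ∈ s, ∀ j ∈ s, f (z i) = f (z j)) →
      ∃ i ∈ s, ∃ G ∈ 𝒢, z i ∈ G) := by
    intro p
    by_cases h : (closure p.1.1 ⊆ v a ∧ closure p.2.1 ⊆ v a ∧ Disjoint p.1.1 p.2.1 ∧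
      (∃ c, p.1.1 ⊆ Metric.closedBall c ε) ∧ (∃ c, p.2.1 ⊆ Metric.closedBall c ε))
    · have : LNGood f s (update (update v a p.1.1) b p.2.1) := by
        by_contra hg
        exact hcon ⟨p.1.1, p.2.1, hBo _ p.1.2, hBo _ p.2.2, h.1, h.2.1, h.2.2.1, h.2.2.2.1,
          h.2.2.2.2, hg⟩
      obtain ⟨𝒢, h1, h2, h3⟩ := this
      exact ⟨𝒢, h1, h2, fun _ => h3⟩
    · exact ⟨∅, countable_empty, by simp, fun h' => absurd h' h⟩
  choose 𝒢 hc hG hcov using hall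
  set 𝒩 : Set (Set Z) := ⋃ p, 𝒢 p with h𝒩
  have h𝒩c : 𝒩.Countable := countable_iUnion hc
  have h𝒩G : ∀ G ∈ 𝒩, MeasurableSet G ∧ InjOn f G := by
    intro G hG'
    obtain ⟨p, hp⟩ := mem_iUnion.1 hG'
    exact hG p G hp
  set T : Set (κ → Z) := {z | (∀ i ∈ s, z i ∈ v i) ∧ (∀ i ∈ s, ∀ j ∈ s, f (z i) = f (z j)) ∧
    ∀ i ∈ s, ∀ G ∈ 𝒩, z i ∉ G} with hT
  have hTm : MeasurableSet T := by
    have e1 : T = (⋂ i ∈ s, (fun z : κ → Z => z i) ⁻¹' v i) ∩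
        ((⋂ i ∈ s, ⋂ j ∈ s, {z : κ → Z | f (z i) = f (z j)}) ∩
        ⋂ i ∈ s, ⋂ G ∈ 𝒩, ((fun z : κ → Z => z i) ⁻¹' G)ᶜ) := by
      ext z; simp [hT]
    rw [e1]
    refine MeasurableSet.inter ?_ (MeasurableSet.inter ?_ ?_)
    · exact MeasurableSet.biInter s.to_countable fun i hi =>
        measurable_pi_apply i (hv i hi).measurableSet
    · exact MeasurableSet.biInter s.to_countable fun i hi =>
        MeasurableSet.biInter s.to_countable fun j hj =>
          measurableSet_eq_fun (hf.measurable.comp (measurable_pi_apply i))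
            (hf.measurable.comp (measurable_pi_apply j))
    · exact MeasurableSet.biInter s.to_countable fun i hi =>
        MeasurableSet.biInter h𝒩c fun G hG' =>
          (measurable_pi_apply i (h𝒩G G hG').1).compl
  have hKa : AnalyticSet ((fun z : κ → Z => z a) '' T) :=
    hTm.analyticSet_image (measurable_pi_apply a)
  have hKi : InjOn f ((fun z : κ → Z => z a) '' T) := by
    rintro _ ⟨z, hz, rfl⟩ _ ⟨z', hz', rfl⟩ he
    by_contra hne
    simp only at he hne
    have hza : z a ∈ v a := hz.1 a ha
    have hza' : z' a ∈ v a := hz'.1 a ha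
    obtain ⟨U, V, hU, hV, hzU, hzV, hd⟩ := t2_separation hne
    obtain ⟨p, hp, hzp, hpU⟩ := (isBasis_countableBasis Z).exists_closure_subset
      (((hU.inter (hv a ha)).inter Metric.isOpen_ball).mem_nhds
        ⟨⟨hzU, hza⟩, Metric.mem_ball_self hε⟩)
    obtain ⟨q, hq, hzq, hqV⟩ := (isBasis_countableBasis Z).exists_closure_subset
      (((hV.inter (hv a ha)).inter Metric.isOpen_ball).mem_nhds
        ⟨⟨hzV, hza'⟩, Metric.mem_ball_self hε⟩)
    have := hcov (⟨p, hp⟩, ⟨q, hq⟩) ⟨fun w hw => (hpU hw).1.2, fun w hw => (hqV hw).1.2,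
      hd.mono (fun w hw => (hpU (subset_closure hw)).1.1)
        (fun w hw => (hqV (subset_closure hw)).1.1),
      ⟨z a, fun w hw => Metric.ball_subset_closedBall (hpU (subset_closure hw)).2⟩,
      ⟨z' a, fun w hw => Metric.ball_subset_closedBall (hqV (subset_closure hw)).2⟩⟩
      (update z b (z' a)) ?_ ?_
    · obtain ⟨i, hi, G, hG1, hG2⟩ := this
      have hG3 : G ∈ 𝒩 := mem_iUnion.2 ⟨_, hG1⟩
      by_cases hib : i = b
      · subst hib
        rw [update_self] at hG2
        exact hz'.2.2 a ha G hG3 hG2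
      · rw [update_of_ne hib] at hG2
        exact hz.2.2 i hi G hG3 hG2
    · intro i hi
      by_cases hib : i = b
      · subst hib; simpa using hzq
      · rw [update_of_ne hib, update_of_ne hib]
        by_cases hia : i = a
        · subst hia; simpa using hzp
        · rw [update_of_ne hia]; exact hz.1 i hi
    · have key : ∀ i ∈ s, f (update z b (z' a) i) = f (z a) := by
        intro i hi
        by_cases hib : i = b
        · subst hib; rw [update_self]; exact he.symm
        · rw [update_of_ne hib]; exact hz.2.1 i hi a ha
      intro i hi j hj
      rw [key i hi, key j hj]
  obtain ⟨G, hGm, hGi, hKG⟩ := ln_reflect hf hKa hKi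
  refine hng ⟨insert G 𝒩, h𝒩c.insert G, ?_, ?_⟩
  · rintro G' (rfl | h)
    · exact ⟨hGm, hGi⟩
    · exact h𝒩G G' h
  · intro z hz1 hz2
    by_cases h : ∃ i ∈ s, ∃ G ∈ 𝒩, z i ∈ G
    · obtain ⟨i, hi, G', h1, h2⟩ := h
      exact ⟨i, hi, G', Or.inr h1, h2⟩
    · push Not at h
      exact ⟨a, ha, G, Or.inl rfl, hKG ⟨z, ⟨hz1, hz2, h⟩, rfl⟩⟩

end LN


section LN2

open TopologicalSpace Function Filter Topology

variable {Z Y : Type*} [MetricSpace Z] [CompleteSpace Z]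
    [SecondCountableTopology Z] [MeasurableSpace Z]
    [BorelSpace Z] [TopologicalSpace Y] [PolishSpace Y] [MeasurableSpace Y] [BorelSpace Y]

def lnLev (n : ℕ) : Set (List Bool) := {l | l.length = n}

theorem lnLev_finite (n : ℕ) : (lnLev n).Finite := List.finite_length_eq Bool n

def LNSplit (ε : ℝ) (u v : List Bool → Set Z) (l : List Bool) : Prop :=
  (∀ b, IsOpen (v (b :: l)) ∧ closure (v (b :: l)) ⊆ u l ∧ ∃ c, v (b :: l) ⊆ Metric.closedBall c ε) ∧
    Disjoint (v (true :: l)) (v (false :: l))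

theorem ln_step {f : Z → Y} (hf : Continuous f) (n : ℕ) (u : List Bool → Set Z)
    (hu : ∀ l ∈ lnLev n, IsOpen (u l)) (hng : ¬ LNGood f (lnLev n) u) {ε : ℝ} (hε : 0 < ε) :
    ∃ v : List Bool → Set Z, ¬ LNGood f (lnLev (n+1)) v ∧ ∀ l ∈ lnLev n, LNSplit ε u v l := by
  have main : ∀ t : Finset (List Bool), (∀ l ∈ t, l ∈ lnLev n) →
      ∃ v : List Bool → Set Z, ¬ LNGood f (lnLev (n+1)) v ∧ (∀ l ∈ t, LNSplit ε u v l) ∧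
        ∀ l, l ∉ t → ∀ b, v (b :: l) = u l := by
    intro t
    induction t using Finset.induction_on with
    | empty =>
      intro _
      refine ⟨fun l => u l.tail, ?_, by simp, by simp⟩
      rintro ⟨𝒢, h1, h2, h3⟩
      refine hng ⟨𝒢, h1, h2, fun z hz hz2 => ?_⟩
      have ht : ∀ i ∈ lnLev (n+1), i.tail ∈ lnLev n := by
        intro i hi; simp only [lnLev, mem_ofPred_eq, List.length_tail] at *; omega
      obtain ⟨i, hi, G, hG, hz⟩ := h3 (fun l => z l.tail) (fun i hi => hz _ (ht i hi))
        (fun i hi j hj => hz2 _ (ht i hi) _ (ht j hj))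
      exact ⟨i.tail, ht i hi, G, hG, hz⟩
    | insert l t hlt ih =>
      intro hsub
      obtain ⟨v, hv1, hv2, hv3⟩ := ih (fun l' hl' => hsub l' (Finset.mem_insert_of_mem hl'))
      have hl : l ∈ lnLev n := hsub l (Finset.mem_insert_self _ _)
      have hmem : ∀ b : Bool, b :: l ∈ lnLev (n+1) := by
        intro b; simpa [lnLev] using hl
      have hopen : ∀ i ∈ lnLev (n+1), IsOpen (v i) := by
        intro i hi
        obtain ⟨b, i', rfl⟩ : ∃ b i', i = b :: i' := by
          cases i with
          | nil => simp [lnLev] at hi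
          | cons b i' => exact ⟨b, i', rfl⟩
        by_cases hit : i' ∈ t
        · exact ((hv2 i' hit).1 b).1
        · rw [hv3 i' hit b]; exact hu i' (by simpa [lnLev] using hi)
      obtain ⟨V, W, hV, hW, hcV, hcW, hd, hbV, hbW, hg⟩ := ln_split hf (hmem true) (hmem false)
        (by simp) hopen (by rw [hv3 l hlt, hv3 l hlt]) hv1 hε
      rw [hv3 l hlt] at hcV hcW
      have hne : ∀ l', l' ≠ l → ∀ b, update (update v (true :: l) V) (false :: l) W (b :: l') =
          v (b :: l') := by
        intro l' hl' b
        rw [update_of_ne (by simp [hl']), update_of_ne (by simp [hl'])]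
      refine ⟨update (update v (true :: l) V) (false :: l) W, hg, ?_, ?_⟩
      · intro l' hl'
        by_cases h : l' = l
        · subst h
          have e1 : update (update v (true :: l') V) (false :: l') W (true :: l') = V := by
            rw [update_of_ne (by simp), update_self]
          have e2 : update (update v (true :: l') V) (false :: l') W (false :: l') = W := by
            rw [update_self]
          refine ⟨?_, ?_⟩
          · rintro (_ | _)
            · rw [e2]; exact ⟨hW, hcW, hbW⟩
            · rw [e1]; exact ⟨hV, hcV, hbV⟩
          · rw [e1, e2]; exact hd
        · have := hv2 l' ((Finset.mem_insert.1 hl').resolve_left h)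
          unfold LNSplit
          simp only [hne l' h]
          exact this
      · intro l' hl' b
        rw [Finset.mem_insert, not_or] at hl'
        rw [hne l' hl'.1, hv3 l' hl'.2]
  obtain ⟨v, h1, h2, -⟩ := main (lnLev_finite n).toFinset (by simp)
  exact ⟨v, h1, fun l hl => h2 l (by simpa using hl)⟩

theorem ln_main {f : Z → Y} (hf : Continuous f) (hc : ∀ y, (f ⁻¹' {y}).Countable) :
    ∃ 𝒢 : Set (Set Z), 𝒢.Countable ∧ (∀ G ∈ 𝒢, MeasurableSet G ∧ InjOn f G) ∧ ⋃₀ 𝒢 = univ := by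
  by_contra hcon
  have h0 : ¬ LNGood f (lnLev 0) (fun _ => (univ : Set Z)) := by
    rintro ⟨𝒢, h1, h2, h3⟩
    refine hcon ⟨𝒢, h1, h2, ?_⟩
    rw [eq_univ_iff_forall]
    intro z
    obtain ⟨i, hi, G, hG, hz⟩ := h3 (fun _ => z) (by simp) (by simp)
    exact ⟨G, hG, hz⟩
  let St : ℕ → Type _ := fun n => {u : List Bool → Set Z // ¬ LNGood f (lnLev n) u ∧
    ∀ l ∈ lnLev n, IsOpen (u l)}
  have hpos : ∀ n : ℕ, (0:ℝ) < (1/2)^n := fun n => by positivity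
  have hstep : ∀ n, ∀ u : St n, ∃ v : St (n+1), ∀ l ∈ lnLev n, LNSplit ((1/2)^n) u.1 v.1 l := by
    intro n u
    obtain ⟨v, h1, h2⟩ := ln_step hf n u.1 u.2.2 u.2.1 (hpos n)
    refine ⟨⟨v, h1, ?_⟩, h2⟩
    intro i hi
    cases i with
    | nil => simp [lnLev] at hi
    | cons b i' => exact ((h2 i' (by simpa [lnLev] using hi)).1 b).1
  choose nxt hnxt using hstep
  let S : ∀ n, St n := fun n => Nat.rec (⟨fun _ => univ, h0, by simp⟩ : St 0) (fun n u => nxt n u) n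
  have hS : ∀ n, ∀ l ∈ lnLev n, LNSplit ((1/2)^n) (S n).1 (S (n+1)).1 l := fun n => hnxt n (S n)
  let A : List Bool → Set Z := fun l => (S l.length).1 l
  have hA : ∀ l, LNSplit ((1/2)^l.length) A A l := by
    intro l
    have := hS l.length l rfl
    exact this
  have hanti : CantorScheme.ClosureAntitone A := fun l b => ((hA l).1 b).2.1
  have hdisj : CantorScheme.Disjoint A := by
    intro l a b hab
    rcases a with _ | _ <;> rcases b with _ | _
    · exact absurd rfl hab
    · exact (hA l).2.symm
    · exact (hA l).2
    · exact absurd rfl hab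
  have hdiamle : ∀ (x : ℕ → Bool) (n : ℕ), Metric.ediam (A (PiNat.res x (n+1))) ≤
      ENNReal.ofReal (2 * (1/2)^n) := by
    intro x n
    obtain ⟨c, hc⟩ := ((hA (PiNat.res x n)).1 (x n)).2.2
    rw [PiNat.res_length] at hc
    rw [PiNat.res_succ]
    refine Metric.ediam_le fun a ha b hb => ?_
    rw [edist_dist]
    refine ENNReal.ofReal_le_ofReal ?_
    have h1 := Metric.mem_closedBall.1 (hc ha)
    have h2 := Metric.mem_closedBall'.1 (hc hb)
    have h3 := dist_triangle a c b
    linarith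
  have hdiam : CantorScheme.VanishingDiam A := by
    intro x
    rw [← tendsto_add_atTop_iff_nat 1]
    refine tendsto_of_tendsto_of_tendsto_of_le_of_le tendsto_const_nhds ?_ (fun n => zero_le)
      (hdiamle x)
    have : Tendsto (fun n : ℕ => (2:ℝ) * (1/2)^n) atTop (𝓝 (2 * 0)) :=
      (_root_.tendsto_pow_atTop_nhds_zero_of_lt_one (by norm_num) (by norm_num)).const_mul _
    simpa using ENNReal.tendsto_ofReal this
  have htup : ∀ n, ∃ z : List Bool → Z, (∀ i ∈ lnLev n, z i ∈ A i) ∧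
      (∀ i ∈ lnLev n, ∀ j ∈ lnLev n, f (z i) = f (z j)) := by
    intro n
    by_contra h
    push Not at h
    refine (S n).2.1 ⟨∅, countable_empty, by simp, fun z hz hz2 => ?_⟩
    exfalso
    obtain ⟨i, hi, j, hj, hne⟩ := h z (fun i hi => by
      have := hz i hi
      have hl : i.length = n := hi
      subst hl
      exact this)
    exact hne (hz2 i hi j hj)
  choose z hz1 hz2 using htup
  have hres : ∀ (x : ℕ → Bool) n, PiNat.res x n ∈ lnLev n := fun x n => PiNat.res_length x n
  have hne : ∀ l, (A l).Nonempty := fun l => ⟨z l.length l, hz1 _ _ rfl⟩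
  have hdom := hanti.map_of_vanishingDiam hdiam hne
  set φ : (ℕ → Bool) → Z := fun x => (CantorScheme.inducedMap A).2 ⟨x, by rw [hdom]; trivial⟩
    with hφ
  have hφm : ∀ x n, φ x ∈ A (PiNat.res x n) := fun x n => CantorScheme.map_mem _ n
  have hφi : Injective φ := by
    intro x y hxy
    have := hdisj.map_injective hxy
    simpa using this
  have hlim : ∀ x, Tendsto (fun n => z n (PiNat.res x n)) atTop (𝓝 (φ x)) := by
    intro x
    rw [tendsto_iff_edist_tendsto_0]
    refine tendsto_of_tendsto_of_tendsto_of_le_of_le tendsto_const_nhds (hdiam x)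
      (fun n => zero_le) (fun n => ?_)
    exact Metric.edist_le_ediam_of_mem (hz1 n _ (hres x n)) (hφm x n)
  have hconst : ∀ x y, f (φ x) = f (φ y) := by
    intro x y
    have h1 := (hf.tendsto (φ x)).comp (hlim x)
    have h2 := (hf.tendsto (φ y)).comp (hlim y)
    refine tendsto_nhds_unique h1 (h2.congr fun n => ?_)
    exact hz2 n _ (hres y n) _ (hres x n)
  have hcount : (range φ).Countable := (hc (f (φ fun _ => true))).mono (by
    rintro _ ⟨x, rfl⟩; exact hconst _ _)
  have : Countable (ℕ → Bool) := by
    have := hcount.to_subtype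
    exact (injective_codRestrict (s := range φ) (f := φ) (h := mem_range_self)|>.2 hφi).countable
  obtain ⟨e, he⟩ := exists_surjective_nat (ℕ → Bool)
  obtain ⟨n, hn⟩ := he fun n => !(e n n)
  have h3 := congrFun hn n
  simp at h3

end LN2


section LN3

open TopologicalSpace Function Filter Topology

theorem ln_polish {Z Y : Type*} [TopologicalSpace Z] [PolishSpace Z] [MeasurableSpace Z]
    [BorelSpace Z] [TopologicalSpace Y] [PolishSpace Y] [MeasurableSpace Y] [BorelSpace Y]
    {f : Z → Y} (hf : Continuous f) (hc : ∀ y, (f ⁻¹' {y}).Countable) :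
    ∃ 𝒢 : Set (Set Z), 𝒢.Countable ∧ (∀ G ∈ 𝒢, MeasurableSet G ∧ InjOn f G) ∧ ⋃₀ 𝒢 = univ := by
  let _ := upgradeIsCompletelyMetrizable Z
  exact ln_main hf hc

theorem ln_borel {Z Y : Type*} [MeasurableSpace Z] [StandardBorelSpace Z] [MeasurableSpace Y]
    [StandardBorelSpace Y]
    {f : Z → Y} (hf : Measurable f) (hc : ∀ y, (f ⁻¹' {y}).Countable) :
    ∃ 𝒢 : Set (Set Z), 𝒢.Countable ∧ (∀ G ∈ 𝒢, MeasurableSet G ∧ InjOn f G) ∧ ⋃₀ 𝒢 = univ := by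
  let iZ := upgradeStandardBorel Z
  let iY := upgradeStandardBorel Y
  obtain ⟨t', hle, hfc, ht'⟩ := hf.exists_continuous
  have hb : @BorelSpace Z t' _ := by
    refine @BorelSpace.mk _ t' _ ?_
    rw [borel_eq_borel_of_le (t' := iZ.toTopologicalSpace) ht' inferInstance hle]
    exact iZ.toBorelSpace.measurable_eq
  exact @ln_polish Z Y t' ht' _ hb _ _ _ _ f hfc hc

theorem ln_functions {X : Type*} [MeasurableSpace X] [StandardBorelSpace X]
    {E : X → X → Prop} (hE : IsCBER E) :
    ∃ g : ℕ → X → X, (∀ n, Measurable (g n)) ∧ ∀ x y, E x y ↔ ∃ n, g n x = y := by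
  classical
  obtain ⟨heq, hm, hc⟩ := hE
  have hst : StandardBorelSpace {p : X × X | E p.1 p.2} := hm.standardBorel
  let f : {p : X × X | E p.1 p.2} → X := fun p => p.1.1
  have hf : Measurable f := measurable_fst.comp measurable_subtype_coe
  have hcf : ∀ y, (f ⁻¹' {y}).Countable := by
    intro y
    refine (MapsTo.countable_of_injOn (f := fun p : {p : X × X | E p.1 p.2} => p.1.2)
      (t := {z | E y z}) ?_ ?_ (hc y))
    · rintro ⟨⟨a, b⟩, hab⟩ h
      simp only [f, mem_preimage, mem_singleton_iff] at h
      subst h; exact hab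
    · rintro ⟨⟨a, b⟩, hab⟩ h ⟨⟨a', b'⟩, hab'⟩ h' he
      simp only [f, mem_preimage, mem_singleton_iff] at h h'
      subst h; subst h'
      simp only at he
      subst he; rfl
  obtain ⟨𝒢, h1, h2, h3⟩ := ln_borel hf hcf
  -- enumerate with nonempty
  obtain ⟨G, hG⟩ : ∃ G : ℕ → Set {p : X × X | E p.1 p.2}, insert ∅ 𝒢 = range G :=
    (h1.insert ∅).exists_eq_range (insert_nonempty _ _)
  have hGm : ∀ n, MeasurableSet (G n) ∧ InjOn f (G n) := by
    intro n
    have : G n ∈ insert ∅ 𝒢 := by rw [hG]; exact mem_range_self n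
    rcases this with h | h
    · rw [h]; simp
    · exact h2 _ h
  have himg : ∀ n (B : Set X), MeasurableSet B →
      MeasurableSet (f '' (G n ∩ {p | p.1.2 ∈ B})) := by
    intro n B hB
    refine MeasurableSet.image_of_measurable_injOn (f := f) ?_ hf
      ((hGm n).2.mono inter_subset_left)
    exact (hGm n).1.inter ((measurable_snd.comp measurable_subtype_coe) hB)
  let g : ℕ → X → X := fun n x => if h : ∃ y, ∃ hy : E x y, (⟨(x, y), hy⟩ : {p : X × X | E p.1 p.2}) ∈ G n
    then h.choose else x
  have hgs : ∀ n x y (hy : E x y), (⟨(x, y), hy⟩ : {p : X × X | E p.1 p.2}) ∈ G n → g n x = y := by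
    intro n x y hy hG'
    have h : ∃ y, ∃ hy : E x y, (⟨(x, y), hy⟩ : {p : X × X | E p.1 p.2}) ∈ G n := ⟨y, hy, hG'⟩
    have e : g n x = h.choose := dif_pos h
    obtain ⟨hy2, hG2⟩ := h.choose_spec
    rw [e]
    have := (hGm n).2 hG2 hG' rfl
    exact congrArg (fun p => p.1.2) this
  have hgE : ∀ n x, E x (g n x) := by
    intro n x
    by_cases h : ∃ y, ∃ hy : E x y, (⟨(x, y), hy⟩ : {p : X × X | E p.1 p.2}) ∈ G n
    · have e : g n x = h.choose := dif_pos h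
      rw [e]; exact h.choose_spec.1
    · have e : g n x = x := dif_neg h
      rw [e]; exact heq.refl x
  refine ⟨g, ?_, ?_⟩
  · intro n B hB
    have hdom : MeasurableSet (f '' (G n)) := by simpa using himg n univ MeasurableSet.univ
    have : g n ⁻¹' B = f '' (G n ∩ {p | p.1.2 ∈ B}) ∪ (B ∩ (f '' G n)ᶜ) := by
      ext x
      constructor
      · intro hx
        by_cases h : ∃ y, ∃ hy : E x y, (⟨(x, y), hy⟩ : {p : X × X | E p.1 p.2}) ∈ G n
        · obtain ⟨y, hy, hG'⟩ := h
          left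
          refine ⟨_, ⟨hG', ?_⟩, rfl⟩
          have := hgs n x y hy hG'
          rw [mem_preimage, this] at hx
          exact hx
        · right
          have e : g n x = x := dif_neg h
          rw [mem_preimage, e] at hx
          refine ⟨hx, ?_⟩
          rintro ⟨⟨⟨a, b⟩, hab⟩, hp, rfl⟩
          exact h ⟨b, hab, hp⟩
      · rintro (⟨⟨⟨a, b⟩, hab⟩, ⟨hp, hb⟩, rfl⟩ | ⟨hx, hn⟩)
        · rw [mem_preimage]
          have := hgs n a b hab hp
          simp only [f]
          rw [this]; exact hb
        · have h : ¬ ∃ y, ∃ hy : E x y, (⟨(x, y), hy⟩ : {p : X × X | E p.1 p.2}) ∈ G n := by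
            rintro ⟨y, hy, hp⟩
            exact hn ⟨_, hp, rfl⟩
          have e : g n x = x := dif_neg h
          rw [mem_preimage, e]; exact hx
    rw [this]
    exact (himg n B hB).union (hB.inter hdom.compl)
  · intro x y
    constructor
    · intro hy
      have : (⟨(x, y), hy⟩ : {p : X × X | E p.1 p.2}) ∈ ⋃₀ 𝒢 := by rw [h3]; trivial
      obtain ⟨G', hG', hp⟩ := this
      have : G' ∈ range G := by rw [← hG]; exact Or.inr hG'
      obtain ⟨n, rfl⟩ := this
      exact ⟨n, hgs n x y hy hp⟩
    · rintro ⟨n, rfl⟩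
      exact hgE n x

end LN3


section ES

theorem eSize_mono (ρ : X → X → ℝ) {Y Y' : Set X} (h : Y ⊆ Y') (z : X) :
    eSize ρ Y z ≤ eSize ρ Y' z :=
  ENNReal.tsum_mono_subtype (fun y => ENNReal.ofReal (ρ y z)) h

theorem eSize_union_le (ρ : X → X → ℝ) (Y Y' : Set X) (z : X) :
    eSize ρ (Y ∪ Y') z ≤ eSize ρ Y z + eSize ρ Y' z :=
  ENNReal.tsum_union_le (fun y => ENNReal.ofReal (ρ y z)) Y Y'

theorem eSize_union (ρ : X → X → ℝ) {Y Y' : Set X} (h : Disjoint Y Y') (z : X) :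
    eSize ρ (Y ∪ Y') z = eSize ρ Y z + eSize ρ Y' z :=
  ENNReal.summable.tsum_union_disjoint (f := fun y => ENNReal.ofReal (ρ y z)) h ENNReal.summable

theorem eSize_empty (ρ : X → X → ℝ) (z : X) : eSize ρ ∅ z = 0 := by
  simp [eSize]

theorem eSize_singleton (ρ : X → X → ℝ) (y z : X) :
    eSize ρ {y} z = ENNReal.ofReal (ρ y z) := by
  simp [eSize]

theorem eSize_finite (ρ : X → X → ℝ) {Y : Set X} (h : Y.Finite) (z : X) :
    eSize ρ Y z ≠ ⊤ := by
  have := h.to_subtype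
  have := Fintype.ofFinite Y
  rw [eSize, tsum_fintype]
  exact ENNReal.sum_ne_top.2 fun _ _ => ENNReal.ofReal_ne_top

theorem le_eSize (ρ : X → X → ℝ) {Y : Set X} {y : X} (h : y ∈ Y) (z : X) :
    ENNReal.ofReal (ρ y z) ≤ eSize ρ Y z := by
  rw [← eSize_singleton]
  exact eSize_mono ρ (singleton_subset_iff.2 h) z

theorem eSize_diff_add (ρ : X → X → ℝ) (M Y : Set X) (z : X) :
    eSize ρ (M ∩ Y) z + eSize ρ (M \ Y) z = eSize ρ M z := by
  rw [← eSize_union ρ (disjoint_sdiff_right.mono_left inter_subset_right), inter_union_sdiff]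

section coc
variable [MeasurableSpace X] {E : X → X → Prop} {ρ : X → X → ℝ}

theorem coc_pos (hρ : IsCocycle E ρ) {x y : X} (h : E x y) : 0 < ENNReal.ofReal (ρ x y) :=
  ENNReal.ofReal_pos.2 (hρ.2.1 h)

theorem coc_one (hE : IsCBER E) (hρ : IsCocycle E ρ) (x : X) : ρ x x = 1 := by
  have h := hρ.2.2 (hE.1.refl x) (hE.1.refl x)
  have h2 := hρ.2.1 (hE.1.refl x)
  nlinarith [mul_pos h2 h2]

theorem eSize_base (hE : IsCBER E) (hρ : IsCocycle E ρ) {Y : Set X} {z z' : X} (h : E z z')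
    (hY : ∀ y ∈ Y, E z y) :
    eSize ρ Y z' = eSize ρ Y z * ENNReal.ofReal (ρ z z') := by
  rw [eSize, eSize, ← ENNReal.tsum_mul_right]
  refine tsum_congr fun y => ?_
  rw [hρ.2.2 (hE.1.symm (hY y y.2)) h,
    ENNReal.ofReal_mul (hρ.2.1 (hE.1.symm (hY y y.2))).le]

theorem eSize_le_base (hE : IsCBER E) (hρ : IsCocycle E ρ) {Y Y' : Set X} {z z' : X} (h : E z z')
    (hY : ∀ y ∈ Y, E z y) (hY' : ∀ y ∈ Y', E z y) (c : ℝ≥0∞)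
    (hle : eSize ρ Y z ≤ c * eSize ρ Y' z) : eSize ρ Y z' ≤ c * eSize ρ Y' z' := by
  rw [eSize_base hE hρ h hY, eSize_base hE hρ h hY', ← mul_assoc]
  gcongr

theorem eSize_pos (hρ : IsCocycle E ρ) {Y : Set X} {y z : X} (h : y ∈ Y) (hE : E y z) :
    0 < eSize ρ Y z := (coc_pos hρ hE).trans_le (le_eSize ρ h z)

end coc

section meas
variable [MeasurableSpace X] {E : X → X → Prop} {ρ : X → X → ℝ} {T : Type*} [MeasurableSpace T]

theorem m2 {R : X → X → Prop} (h : Measurable fun p : X × X => R p.1 p.2) {a b : T → X}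
    (ha : Measurable a) (hb : Measurable b) : Measurable fun t => R (a t) (b t) :=
  h.comp (ha.prodMk hb)

/-- a family of Borel functions enumerating classes -/
structure Enum (E : X → X → Prop) (g : ℕ → X → X) : Prop where
  meas : ∀ n, Measurable (g n)
  iff : ∀ x y, E x y ↔ ∃ n, g n x = y

theorem mEx {g : ℕ → X → X} (hg : Enum E g) {Q : T → X → Prop}
    (hQ : Measurable fun p : T × X => Q p.1 p.2) {a : T → X} (ha : Measurable a) :
    Measurable fun t => ∃ y, E (a t) y ∧ Q t y := by
  have : (fun t => ∃ y, E (a t) y ∧ Q t y) = fun t => ∃ n, Q t (g n (a t)) := by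
    ext t
    simp only [hg.iff]
    constructor
    · rintro ⟨_, ⟨n, rfl⟩, h⟩; exact ⟨n, h⟩
    · rintro ⟨n, h⟩; exact ⟨_, ⟨n, rfl⟩, h⟩
  rw [this]
  exact Measurable.exists fun n => hQ.comp (measurable_id.prodMk ((hg.meas n).comp ha))

theorem mAll {g : ℕ → X → X} (hg : Enum E g) {Q : T → X → Prop}
    (hQ : Measurable fun p : T × X => Q p.1 p.2) {a : T → X} (ha : Measurable a) :
    Measurable fun t => ∀ y, E (a t) y → Q t y := by
  have := (mEx hg (Q := fun t y => ¬ Q t y) hQ.not ha).not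
  convert this using 2
  push Not
  rfl

theorem meas_eq [StandardBorelSpace X] {a b : T → X} (ha : Measurable a) (hb : Measurable b) :
    Measurable fun t => a t = b t := by
  have := measurableSet_eq_fun ha hb
  exact measurableSet_setOfPred.1 this

theorem mSize [StandardBorelSpace X] {g : ℕ → X → X} (hg : Enum E g) (hρ : IsCocycle E ρ)
    {H : T → X → Prop} (hH : Measurable fun p : T × X => H p.1 p.2) {a b : T → X}
    (ha : Measurable a) (hb : Measurable b) (hHE : ∀ t y, H t y → E (a t) y) :
    Measurable fun t => eSize ρ {y | H t y} (b t) := by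
  classical
  have key : (fun t => eSize ρ {y | H t y} (b t)) = fun t => ∑' n : ℕ,
      if (∀ m < n, g m (a t) ≠ g n (a t)) ∧ H t (g n (a t))
        then ENNReal.ofReal (ρ (g n (a t)) (b t)) else 0 := by
    ext t
    set s : Set ℕ := {n | (∀ m < n, g m (a t) ≠ g n (a t)) ∧ H t (g n (a t))} with hs
    have h1 : {y | H t y} = (fun n => g n (a t)) '' s := by
      ext y
      constructor
      · intro hy
        have hex := (hg.iff _ _).1 (hHE t y hy)
        refine ⟨Nat.find hex, ⟨fun m hm => ?_, ?_⟩, Nat.find_spec hex⟩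
        · rw [Nat.find_spec hex]; exact Nat.find_min hex hm
        · rw [Nat.find_spec hex]; exact hy
      · rintro ⟨n, hn, rfl⟩; exact hn.2
    have hinj : InjOn (fun n => g n (a t)) s := by
      intro n hn m hm h
      rcases lt_trichotomy n m with h' | h' | h'
      · exact absurd h (hm.1 n h')
      · exact h'
      · exact absurd h.symm (hn.1 m h')
    rw [eSize, h1, tsum_image (fun y => ENNReal.ofReal (ρ y (b t))) hinj,
      tsum_subtype s fun n => ENNReal.ofReal (ρ (g n (a t)) (b t))]
    refine tsum_congr fun n => ?_
    simp only [indicator, hs]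
    rfl
  rw [key]
  refine Measurable.tsum fun n => ?_
  refine Measurable.ite ?_ ?_ measurable_const
  · refine measurableSet_setOfPred.2 (Measurable.and ?_ ?_)
    · refine Measurable.forall fun m => Measurable.forall fun _ => ?_
      exact (meas_eq ((hg.meas m).comp ha) ((hg.meas n).comp ha)).not
    · exact hH.comp (measurable_id.prodMk ((hg.meas n).comp ha))
  · exact (hρ.1.comp (((hg.meas n).comp ha).prodMk hb)).ennreal_ofReal
end meas

end ES


section KM

theorem exists_sep_seq (X : Type*) [MeasurableSpace X] [StandardBorelSpace X] :
    ∃ u : ℕ → Set X, (∀ n, MeasurableSet (u n)) ∧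
      ∀ (x : X) (F : Set X), F.Finite → x ∉ F → ∃ n, x ∈ u n ∧ ∀ y ∈ F, y ∉ u n := by
  let iX := upgradeStandardBorel X
  have hc : (insert ∅ (TopologicalSpace.countableBasis X)).Countable :=
    (TopologicalSpace.countable_countableBasis X).insert ∅
  obtain ⟨u, hu⟩ := hc.exists_eq_range (insert_nonempty _ _)
  refine ⟨u, fun n => ?_, fun x F hF hx => ?_⟩
  · have : u n ∈ insert ∅ (TopologicalSpace.countableBasis X) := by rw [hu]; exact mem_range_self n
    rcases this with h | h
    · rw [h]; exact MeasurableSet.empty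
    · exact ((TopologicalSpace.isBasis_countableBasis X).isOpen h).measurableSet
  · obtain ⟨v, hv, hxv, hvF⟩ := (TopologicalSpace.isBasis_countableBasis X).exists_subset_of_mem_open
      (show x ∈ Fᶜ from hx) hF.isClosed.isOpen_compl
    have : v ∈ range u := by rw [← hu]; exact Or.inr hv
    obtain ⟨n, rfl⟩ := this
    exact ⟨n, hxv, fun y hy h => hvF h hy⟩

variable [MeasurableSpace X]

/-- the finite subset of the class of `x` coded by `l` -/
def kmS (g : ℕ → X → X) (l : Finset ℕ) (x : X) : Set X := {y | ∃ i ∈ l, g i x = y}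

/-- good points for a label -/
def kmP (g : ℕ → X → X) (u : ℕ → Set X) (k : Finset ℕ × ℕ × ℕ) (x : X) : Prop :=
  x ∈ u k.2.2 ∧ (∀ i ∈ k.1, ∃ j < k.2.1, g j (g i x) = x) ∧
    ∀ i ∈ k.1, ∀ j < k.2.1, g j (g i x) ≠ x → g j (g i x) ∉ u k.2.2

/-- chosen points at a stage -/
def kmQ (g : ℕ → X → X) (u : ℕ → Set X) (Φ : Set X → Prop) (k : Finset ℕ × ℕ × ℕ)
    (W : X → Prop) (x : X) : Prop :=
  kmP g u k x ∧ Φ (kmS g k.1 x) ∧ ∀ i ∈ k.1, ¬ W (g i x)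

/-- used points -/
def kmU (E : X → X → Prop) (g : ℕ → X → X) (u : ℕ → Set X) (Φ : Set X → Prop)
    (lab : ℕ → Finset ℕ × ℕ × ℕ) : ℕ → X → Prop
  | 0 => fun _ => False
  | n + 1 => fun y => kmU E g u Φ lab n y ∨
      ∃ x, E y x ∧ kmQ g u Φ (lab n) (kmU E g u Φ lab n) x ∧ y ∈ kmS g (lab n).1 x

theorem km [StandardBorelSpace X] {E : X → X → Prop} (hE : IsCBER E) {g : ℕ → X → X}
    (hg : Enum E g) (Φ : Set X → Prop)
    (hΦ : ∀ l : Finset ℕ, Measurable fun x => Φ (kmS g l x)) :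
    ∃ R : X → X → Prop, (Measurable fun p : X × X => R p.1 p.2) ∧ (∀ x y, R x y → R y x) ∧
      (∀ x y z, R x y → R y z → R x z) ∧ (∀ x y, R x y → E x y) ∧
      (∀ y, R y y → {y' | R y y'}.Finite ∧ Φ {y' | R y y'}) ∧
      ∀ T : Set X, T.Finite → T.Nonempty → (∀ a ∈ T, ∀ b ∈ T, E a b) → Φ T → ∃ y ∈ T, R y y := by
  classical
  obtain ⟨u, hum, hu⟩ := exists_sep_seq X
  obtain ⟨lab, hlab⟩ := exists_surjective_nat (Finset ℕ × ℕ × ℕ)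
  set U := kmU E g u Φ lab with hU
  set Q : ℕ → X → Prop := fun n => kmQ g u Φ (lab n) (U n) with hQ
  have hgE : ∀ n x, E x (g n x) := fun n x => (hg.iff _ _).2 ⟨n, rfl⟩
  have hUs : ∀ n y, U (n + 1) y ↔ (U n y ∨ ∃ x, E y x ∧ Q n x ∧ y ∈ kmS g (lab n).1 x) :=
    fun n y => Iff.rfl
  have hSE : ∀ l x y, y ∈ kmS g l x → E y x := by
    rintro l x y ⟨i, _, rfl⟩; exact hE.1.symm (hgE i x)
  have hSm : ∀ (l : Finset ℕ), Measurable fun p : X × X => p.1 ∈ kmS g l p.2 := by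
    intro l
    have : (fun p : X × X => p.1 ∈ kmS g l p.2) = fun p => ∃ i, i ∈ l ∧ g i p.2 = p.1 := rfl
    rw [this]
    exact Measurable.exists fun i => measurable_const.and
      (meas_eq ((hg.meas i).comp measurable_snd) measurable_fst)
  have hPm : ∀ k, Measurable (kmP g u k) := by
    intro k
    refine Measurable.and (measurableSet_setOfPred.1 (hum _)) (Measurable.and ?_ ?_)
    · refine Measurable.forall fun i => Measurable.forall fun _ => ?_
      refine Measurable.exists fun j => measurable_const.and ?_
      exact meas_eq ((hg.meas j).comp (hg.meas i)) measurable_id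
    · refine Measurable.forall fun i => Measurable.forall fun _ => ?_
      refine Measurable.forall fun j => Measurable.forall fun _ => ?_
      refine Measurable.imp (meas_eq ((hg.meas j).comp (hg.meas i)) measurable_id).not ?_
      exact Measurable.not (measurableSet_setOfPred.1
        (((hg.meas j).comp (hg.meas i)) (hum _)))
  have hQm' : ∀ n, Measurable (U n) → Measurable (Q n) := by
    intro n hn
    refine (hPm _).and ((hΦ _).and ?_)
    refine Measurable.forall fun i => Measurable.forall fun _ => ?_
    exact (hn.comp (hg.meas i)).not
  have hUm : ∀ n, Measurable (U n) := by
    intro n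
    induction n with
    | zero => exact measurable_const
    | succ n ih =>
      refine ih.or ?_
      exact mEx hg (Q := fun y x => Q n x ∧ y ∈ kmS g (lab n).1 x)
        (((hQm' n ih).comp measurable_snd).and (hSm _)) measurable_id
  have hQm : ∀ n, Measurable (Q n) := fun n => hQm' n (hUm n)
  have hUmono : ∀ n m, n ≤ m → ∀ y, U n y → U m y := by
    intro n m h
    induction h with
    | refl => exact fun y h => h
    | step h ih => exact fun y hy => (hUs _ _).2 (Or.inl (ih y hy))
  have hQU : ∀ n x y, Q n x → y ∈ kmS g (lab n).1 x → U (n + 1) y := fun n x y h1 h2 =>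
    (hUs _ _).2 (Or.inr ⟨x, hSE _ _ _ h2, h1, h2⟩)
  have hlt : ∀ n m x x' y, n < m → Q n x → Q m x' → y ∈ kmS g (lab n).1 x →
      y ∈ kmS g (lab m).1 x' → False := by
    intro n m x x' y hnm h1 h2 h3 h4
    have h5 := hUmono _ _ hnm y (hQU _ _ _ h1 h3)
    obtain ⟨i, hi, rfl⟩ := h4
    exact h2.2.2 i hi h5
  have huniq : ∀ n m x x' y, Q n x → Q m x' → y ∈ kmS g (lab n).1 x →
      y ∈ kmS g (lab m).1 x' → n = m ∧ x = x' := by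
    intro n m x x' y h1 h2 h3 h4
    rcases lt_trichotomy n m with h | h | h
    · exact (hlt _ _ _ _ _ h h1 h2 h3 h4).elim
    · subst h
      refine ⟨rfl, ?_⟩
      by_contra hne
      obtain ⟨i, hi, rfl⟩ := h3
      obtain ⟨i', hi', h4⟩ := h4
      obtain ⟨j, hj, hj2⟩ := h2.1.2.1 i' hi'
      rw [h4] at hj2
      have := h1.1.2.2 i hi j hj (by rw [hj2]; exact fun h => hne h.symm)
      rw [hj2] at this
      exact this h2.1.1
    · exact (hlt _ _ _ _ _ h h2 h1 h4 h3).elim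
  let R : X → X → Prop := fun y y' => ∃ n, ∃ x, E y x ∧ (Q n x ∧ y ∈ kmS g (lab n).1 x ∧
    y' ∈ kmS g (lab n).1 x)
  have hcl : ∀ n x y, Q n x → y ∈ kmS g (lab n).1 x → {y' | R y y'} = kmS g (lab n).1 x := by
    intro n x y h1 h2
    ext y'
    constructor
    · rintro ⟨m, x', _, h3, h4, h5⟩
      obtain ⟨rfl, rfl⟩ := huniq _ _ _ _ _ h1 h3 h2 h4
      exact h5
    · intro h
      exact ⟨n, x, hSE _ _ _ h2, h1, h2, h⟩
  have hUR : ∀ n y, U n y → R y y := by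
    intro n y
    induction n with
    | zero => exact fun h => h.elim
    | succ n ih =>
      rintro (h | ⟨x, h1, h2, h3⟩)
      · exact ih h
      · exact ⟨n, x, h1, h2, h3, h3⟩
  refine ⟨R, ?_, ?_, ?_, ?_, ?_, ?_⟩
  · refine Measurable.exists fun n => ?_
    refine mEx hg (Q := fun p x => Q n x ∧ p.1 ∈ kmS g (lab n).1 x ∧
      p.2 ∈ kmS g (lab n).1 x) ?_ measurable_fst
    refine ((hQm n).comp measurable_snd).and (Measurable.and ?_ ?_)
    · exact (hSm _).comp ((measurable_fst.comp measurable_fst).prodMk measurable_snd)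
    · exact (hSm _).comp ((measurable_snd.comp measurable_fst).prodMk measurable_snd)
  · rintro x y ⟨n, z, h1, h2, h3, h4⟩
    exact ⟨n, z, hSE _ _ _ h4, h2, h4, h3⟩
  · rintro x y z ⟨n, w, h1, h2, h3, h4⟩ ⟨m, w', h1', h2', h3', h4'⟩
    obtain ⟨rfl, rfl⟩ := huniq _ _ _ _ _ h2 h2' h4 h3'
    exact ⟨n, w, h1, h2, h3, h4'⟩
  · rintro x y ⟨n, z, h1, h2, h3, h4⟩
    exact hE.1.trans h1 (hE.1.symm (hSE _ _ _ h4))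
  · rintro y ⟨n, x, h1, h2, h3, h4⟩
    rw [hcl n x y h2 h3]
    refine ⟨?_, h2.2.1⟩
    exact ((lab n).1.finite_toSet.image fun i => g i x).subset (by
      rintro _ ⟨i, hi, rfl⟩; exact ⟨i, hi, rfl⟩)
  · intro T hT ⟨x, hx⟩ hTE hΦT
    have h1 : ∀ t, ∃ i, t ∈ T → g i x = t := by
      intro t
      by_cases h : t ∈ T
      · obtain ⟨i, hi⟩ := (hg.iff _ _).1 (hTE x hx t h)
        exact ⟨i, fun _ => hi⟩
      · exact ⟨0, fun h' => absurd h' h⟩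
    have h2 : ∀ t, ∃ i, t ∈ T → g i t = x := by
      intro t
      by_cases h : t ∈ T
      · obtain ⟨i, hi⟩ := (hg.iff _ _).1 (hTE t h x hx)
        exact ⟨i, fun _ => hi⟩
      · exact ⟨0, fun h' => absurd h' h⟩
    choose a ha using h1
    choose b hb using h2
    let l : Finset ℕ := hT.toFinset.image a
    let M : ℕ := hT.toFinset.sup b + 1
    have hl : kmS g l x = T := by
      ext t
      constructor
      · rintro ⟨i, hi, rfl⟩
        obtain ⟨s, hs, rfl⟩ := Finset.mem_image.1 hi
        have hs' := hT.mem_toFinset.1 hs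
        rw [ha s hs']; exact hs'
      · intro ht
        exact ⟨a t, Finset.mem_image_of_mem _ (hT.mem_toFinset.2 ht), ha t ht⟩
    have hfin : ((fun p : ℕ × ℕ => g p.2 (g p.1 x)) '' ((l : Set ℕ) ×ˢ (Finset.range M : Set ℕ)) \
        {x}).Finite :=
      ((l.finite_toSet.prod (Finset.range M).finite_toSet).image _).subset sdiff_subset
    obtain ⟨n0, hn0, hn1⟩ := hu x _ hfin (fun h => h.2 rfl)
    obtain ⟨n, hn⟩ := hlab (l, M, n0)
    have hP : kmP g u (lab n) x := by
      rw [hn]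
      refine ⟨hn0, ?_, ?_⟩
      · intro i hi
        obtain ⟨s, hs, rfl⟩ := Finset.mem_image.1 hi
        have hs' := hT.mem_toFinset.1 hs
        refine ⟨b s, Nat.lt_succ_of_le (Finset.le_sup (f := b) hs), ?_⟩
        rw [ha s hs', hb s hs']
      · intro i hi j hj hne
        exact hn1 _ ⟨⟨(i, j), ⟨hi, Finset.mem_coe.2 (Finset.mem_range.2 hj)⟩, rfl⟩, hne⟩
    have hln : kmS g (lab n).1 x = T := by rw [hn]; exact hl
    by_cases hW : ∀ i ∈ (lab n).1, ¬ U n (g i x)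
    · have hQx : Q n x := ⟨hP, by rw [hln]; exact hΦT, hW⟩
      have hxS : x ∈ kmS g (lab n).1 x := by rw [hln]; exact hx
      exact ⟨x, hx, n, x, hE.1.refl x, hQx, hxS, hxS⟩
    · push Not at hW
      obtain ⟨i, hi, hUi⟩ := hW
      refine ⟨g i x, ?_, hUR _ _ hUi⟩
      rw [← hln]; exact ⟨i, hi, rfl⟩

end KM


section SM
variable [MeasurableSpace X]

theorem meas_least {T : Type*} [MeasurableSpace T] {P : ℕ → T → Prop}
    (h : ∀ n, Measurable (P n)) : Measurable fun x => sInf {n | P n x} := by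
  refine measurable_to_countable' fun n => ?_
  have : (fun x => sInf {n | P n x}) ⁻¹' {n} =
      {x | (P n x ∧ ∀ m < n, ¬ P m x) ∨ (n = 0 ∧ ∀ m, ¬ P m x)} := by
    ext x
    simp only [mem_preimage, mem_singleton_iff]
    constructor
    · intro hx
      by_cases hex : ∃ m, P m x
      · left
        have h1 : sInf {n | P n x} ∈ {n | P n x} := Nat.sInf_mem hex
        rw [hx] at h1
        refine ⟨h1, fun m hm hP => ?_⟩
        have := Nat.sInf_le (show m ∈ {n | P n x} from hP)
        omega
      · right
        push Not at hex
        refine ⟨?_, hex⟩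
        rw [← hx, Nat.sInf_eq_zero]
        right
        ext m; simp [hex m]
    · rintro (⟨h1, h2⟩ | ⟨rfl, h2⟩)
      · apply le_antisymm
        · exact Nat.sInf_le h1
        · by_contra hlt
          push Not at hlt
          exact h2 _ hlt (Nat.sInf_mem (s := {n | P n x}) ⟨n, h1⟩)
      · rw [Nat.sInf_eq_zero]
        right
        ext m; simp [h2 m]
  rw [this]
  refine measurableSet_setOfPred.2 (Measurable.or ?_ ?_)
  · exact (h n).and (Measurable.forall fun m => Measurable.forall fun _ => (h m).not)
  · exact measurable_const.and (Measurable.forall fun m => (h m).not)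

theorem pick {E : X → X → Prop} (hE : IsCBER E) {g : ℕ → X → X} (hg : Enum E g)
    {Q : X → X → Prop} (hQ : Measurable fun p : X × X => Q p.1 p.2) :
    ∃ f : X → X, Measurable f ∧ (∀ x, E x (f x)) ∧ (∀ x y, E x y → Q x y → Q x (f x)) ∧
      ∀ x, (∀ y, E x y → ¬ Q x y) → f x = x := by
  classical
  let c : X → ℕ := fun x => sInf {n | Q x (g n x)}
  have hc : Measurable c := meas_least fun n => hQ.comp (measurable_id.prodMk (hg.meas n))
  have hgc : Measurable fun x => g (c x) x := by
    have : Measurable fun p : ℕ × X => g p.1 p.2 :=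
      measurable_from_prod_countable_right fun n => hg.meas n
    exact this.comp (hc.prodMk measurable_id)
  have hex : Measurable fun x => ∃ y, E x y ∧ Q x y := mEx hg hQ measurable_id
  refine ⟨fun x => if ∃ y, E x y ∧ Q x y then g (c x) x else x, ?_, ?_, ?_, ?_⟩
  · exact Measurable.ite (measurableSet_setOfPred.2 hex) hgc measurable_id
  · intro x
    simp only
    split_ifs
    · exact (hg.iff _ _).2 ⟨_, rfl⟩
    · exact hE.1.refl x
  · intro x y h1 h2
    simp only
    rw [if_pos ⟨y, h1, h2⟩]
    obtain ⟨n, rfl⟩ := (hg.iff _ _).1 h1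
    exact Nat.sInf_mem (s := {n | Q x (g n x)}) ⟨n, h2⟩
  · intro x h
    simp only
    rw [if_neg]
    rintro ⟨y, h1, h2⟩
    exact h y h1 h2

theorem smooth_of_fin [StandardBorelSpace X] {E : X → X → Prop} {ρ : X → X → ℝ}
    (hE : IsCBER E) (hρ : IsCocycle E ρ) {g : ℕ → X → X} (hg : Enum E g) {B : Set X}
    {K : X → Prop} (hK : Measurable K)
    (h0 : ∀ x ∈ B, eSize ρ {y | E x y ∧ K y} x ≠ 0)
    (h1 : ∀ x ∈ B, eSize ρ {y | E x y ∧ K y} x ≠ ⊤) : SmoothOn E ρ B := by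
  classical
  have hEm : Measurable fun p : X × X => E p.1 p.2 := measurableSet_setOfPred.1 hE.2.1
  let e : X → ℝ := embeddingReal X
  have heme : MeasurableEmbedding e := measurableEmbedding_embeddingReal X
  let Q : X → X → Prop := fun x y => K y ∧ ∀ y', E x y' →
    (K y' → (ρ y' y < 1 ∨ (ρ y' y = 1 ∧ e y ≤ e y')))
  have hQm : Measurable fun p : X × X => Q p.1 p.2 := by
    refine (hK.comp measurable_snd).and ?_
    refine mAll hg (Q := fun (p : X × X) y' => (K y' → (ρ y' p.2 < 1 ∨
      (ρ y' p.2 = 1 ∧ e p.2 ≤ e y')))) ?_ measurable_fst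
    have hr : Measurable fun q : (X × X) × X => ρ q.2 q.1.2 :=
      hρ.1.comp (measurable_snd.prodMk (measurable_snd.comp measurable_fst))
    refine (hK.comp measurable_snd).imp (Measurable.or ?_ (Measurable.and ?_ ?_))
    · exact measurableSet_setOfPred.1 (measurableSet_lt hr measurable_const)
    · exact measurableSet_setOfPred.1 (measurableSet_eq_fun hr measurable_const)
    · exact measurableSet_setOfPred.1 (measurableSet_le
        (heme.measurable.comp (measurable_snd.comp measurable_fst))
        (heme.measurable.comp measurable_snd))
  have hex : ∀ x ∈ B, ∃ y, E x y ∧ Q x y := by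
    intro x hx
    have hne : ∃ y0, E x y0 ∧ K y0 := by
      by_contra hcon
      push Not at hcon
      apply h0 x hx
      have : {y | E x y ∧ K y} = ∅ := by
        ext y; simpa using hcon y
      rw [this, eSize_empty]
    obtain ⟨y0, hy0, hK0⟩ := hne
    have hpos : ∀ y, E x y → 0 < ρ y x := fun y h => hρ.2.1 (hE.1.symm h)
    have hfin : {y | (E x y ∧ K y) ∧ ρ y0 x ≤ ρ y x}.Finite := by
      have h2 := ENNReal.finite_const_le_of_tsum_ne_top (h1 x hx)
        (ε := ENNReal.ofReal (ρ y0 x)) (by simpa using hpos y0 hy0)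
      refine (h2.image Subtype.val).subset ?_
      rintro y ⟨h3, h4⟩
      exact ⟨⟨y, h3⟩, ENNReal.ofReal_le_ofReal h4, rfl⟩
    obtain ⟨y1, hy1, hmax⟩ := exists_max_image _ (fun y => ρ y x) hfin ⟨y0, ⟨hy0, hK0⟩, le_rfl⟩
    have hmax' : ∀ y, E x y → K y → ρ y x ≤ ρ y1 x := by
      intro y h2 h3
      by_cases h4 : ρ y0 x ≤ ρ y x
      · exact hmax y ⟨⟨h2, h3⟩, h4⟩
      · exact (not_le.1 h4).le.trans hy1.2
    have hfin2 : {y | (E x y ∧ K y) ∧ ρ y x = ρ y1 x}.Finite := by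
      refine hfin.subset ?_
      rintro y ⟨h2, h3⟩
      exact ⟨h2, h3 ▸ hy1.2⟩
    obtain ⟨y2, hy2, hmin⟩ := exists_min_image _ e hfin2 ⟨y1, hy1.1, rfl⟩
    refine ⟨y2, hy2.1.1, hy2.1.2, fun y' h2 h3 => ?_⟩
    have h4 : ρ y' y2 = ρ y' x * ρ x y2 := hρ.2.2 (hE.1.symm h2) hy2.1.1
    have h5 : ρ y2 x * ρ x y2 = 1 := by
      rw [← hρ.2.2 (hE.1.symm hy2.1.1) hy2.1.1, coc_one hE hρ]
    have h6 : 0 < ρ x y2 := hρ.2.1 hy2.1.1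
    rcases (hmax' y' h2 h3).lt_or_eq with h | h
    · left
      rw [h4, ← h5, hy2.2]
      exact mul_lt_mul_of_pos_right h h6
    · right
      refine ⟨?_, hmin y' ⟨⟨h2, h3⟩, h⟩⟩
      rw [h4, h, ← hy2.2, h5]
  obtain ⟨k, hkm, hkE, hkQ, -⟩ := pick hE hg hQm
  have hk : ∀ x ∈ B, Q x (k x) := by
    intro x hx
    obtain ⟨y, hy1, hy2⟩ := hex x hx
    exact hkQ x y hy1 hy2
  have hinv : ∀ x y, x ∈ B → y ∈ B → E x y → k x = k y := by
    intro x y hx hy hxy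
    have ex : E x (k y) := hE.1.trans hxy (hkE y)
    have ey : E y (k x) := hE.1.trans (hE.1.symm hxy) (hkE x)
    have a1 := (hk x hx).2 _ ex (hk y hy).1
    have a2 := (hk y hy).2 _ ey (hk x hx).1
    have hkk : E (k x) (k y) := hE.1.trans (hE.1.symm (hkE x)) ex
    have a3 : ρ (k x) (k y) * ρ (k y) (k x) = 1 := by
      rw [← hρ.2.2 hkk (hE.1.symm hkk), coc_one hE hρ]
    have p1 := hρ.2.1 hkk
    have p2 := hρ.2.1 (hE.1.symm hkk)
    have b1 : ρ (k y) (k x) ≤ 1 := by rcases a1 with h | h; exacts [h.le, h.1.le]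
    have b2 : ρ (k x) (k y) ≤ 1 := by rcases a2 with h | h; exacts [h.le, h.1.le]
    have c1 : ¬ ρ (k y) (k x) < 1 := by intro h; nlinarith
    have c2 : ¬ ρ (k x) (k y) < 1 := by intro h; nlinarith
    have d1 := (a1.resolve_left c1).2
    have d2 := (a2.resolve_left c2).2
    exact heme.injective (le_antisymm d1 d2)
  refine ⟨Ioi 0, isOpen_Ioi, by simp, subset_rfl, fun x => sInf {n | g n (k x) = x}, ?_, ?_⟩
  · exact meas_least fun n => meas_eq ((hg.meas n).comp hkm) measurable_id
  · intro x y hx hy hne hxy _ hc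
    have m1 : ∀ x, g (sInf {n | g n (k x) = x}) (k x) = x := fun x =>
      Nat.sInf_mem (s := {n | g n (k x) = x}) ((hg.iff _ _).1 (hE.1.symm (hkE x)))
    apply hne
    simp only at hc
    rw [← m1 x, ← m1 y, ← hc, hinv x y hx hy hxy]

end SM


section PR
variable [MeasurableSpace X]

/-- partial finite Borel equivalence relation -/
structure PER (E G : X → X → Prop) : Prop where
  meas : Measurable fun p : X × X => G p.1 p.2
  symm : ∀ x y, G x y → G y x
  trans : ∀ x y z, G x y → G y z → G x z
  sub : ∀ x y, G x y → E x y
  fin : ∀ y, {y' | G y y'}.Finite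

theorem PER.left {E G : X → X → Prop} (h : PER E G) {x y : X} (hxy : G x y) : G x x :=
  h.trans _ _ _ hxy (h.symm _ _ hxy)

theorem PER.right {E G : X → X → Prop} (h : PER E G) {x y : X} (hxy : G x y) : G y y :=
  h.trans _ _ _ (h.symm _ _ hxy) hxy

theorem PER.class_eq {E G : X → X → Prop} (h : PER E G) {x y : X} (hxy : G x y) :
    {z | G x z} = {z | G y z} := by
  ext z
  exact ⟨fun hz => h.trans _ _ _ (h.symm _ _ hxy) hz, fun hz => h.trans _ _ _ hxy hz⟩

theorem PER.dom_meas {E G : X → X → Prop} (h : PER E G) : Measurable fun x => G x x :=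
  m2 h.meas measurable_id measurable_id

/-- lower density of `A` in the classes of `G` -/
def Dens (ρ : X → X → ℝ) (A : Set X) (G : X → X → Prop) (c : ℝ≥0∞) : Prop :=
  ∀ y, eSize ρ {y' | G y y'} y ≤ c * eSize ρ ({y' | G y y'} ∩ A) y

theorem dens_inv {E G : X → X → Prop} {ρ : X → X → ℝ} (hE : IsCBER E) (hρ : IsCocycle E ρ)
    (hG : PER E G) {A : Set X} {c : ℝ≥0∞} (hd : Dens ρ A G c) {z : X} {M : Set X}
    (hM : M.Finite) (hinv : ∀ a ∈ M, ∀ b, G a b → b ∈ M) (hdom : ∀ a ∈ M, G a a)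
    (hEz : ∀ a ∈ M, E z a) : eSize ρ M z ≤ c * eSize ρ (M ∩ A) z := by
  classical
  have key : ∀ t : Finset X, (∀ a ∈ t, E z a) →
      eSize ρ {y | ∃ a ∈ t, G a y} z ≤ c * eSize ρ ({y | ∃ a ∈ t, G a y} ∩ A) z := by
    intro t
    induction t using Finset.induction_on with
    | empty => intro _; simp [eSize_empty]
    | insert a t ha ih =>
      intro ht
      have ih' := ih fun a ha => ht a (Finset.mem_insert_of_mem ha)
      by_cases hex : ∃ a' ∈ t, G a' a
      · obtain ⟨a', ha', hG'⟩ := hex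
        have : {y | ∃ b ∈ insert a t, G b y} = {y | ∃ b ∈ t, G b y} := by
          ext y
          constructor
          · rintro ⟨b, hb, hby⟩
            rcases Finset.mem_insert.1 hb with rfl | hb
            · exact ⟨a', ha', hG.trans _ _ _ hG' hby⟩
            · exact ⟨b, hb, hby⟩
          · rintro ⟨b, hb, hby⟩
            exact ⟨b, Finset.mem_insert_of_mem hb, hby⟩
        rw [this]; exact ih'
      · have : {y | ∃ b ∈ insert a t, G b y} = {y | G a y} ∪ {y | ∃ b ∈ t, G b y} := by
          ext y
          constructor
          · rintro ⟨b, hb, hby⟩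
            rcases Finset.mem_insert.1 hb with rfl | hb
            · exact Or.inl hby
            · exact Or.inr ⟨b, hb, hby⟩
          · rintro (h | ⟨b, hb, hby⟩)
            · exact ⟨a, Finset.mem_insert_self _ _, h⟩
            · exact ⟨b, Finset.mem_insert_of_mem hb, hby⟩
        have hdisj : Disjoint {y | G a y} {y | ∃ b ∈ t, G b y} := by
          rw [Set.disjoint_left]
          rintro y h1 ⟨b, hb, h2⟩
          exact hex ⟨b, hb, hG.trans _ _ _ h2 (hG.symm _ _ h1)⟩
        rw [this, union_inter_distrib_right, eSize_union ρ hdisj,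
          eSize_union ρ (hdisj.mono inter_subset_left inter_subset_left), mul_add]
        refine add_le_add ?_ ih'
        have hza := ht a (Finset.mem_insert_self _ _)
        refine eSize_le_base hE hρ (hE.1.symm hza) (fun y hy => hG.sub _ _ hy)
          (fun y hy => hG.sub _ _ hy.1) c (hd a)
  have hk := key hM.toFinset fun a ha => hEz a (hM.mem_toFinset.1 ha)
  have : {y | ∃ a ∈ hM.toFinset, G a y} = M := by
    ext y
    constructor
    · rintro ⟨a, ha, h⟩
      exact hinv a (hM.mem_toFinset.1 ha) y h
    · intro hy
      exact ⟨y, hM.mem_toFinset.2 hy, hdom y hy⟩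
  rwa [this] at hk

/-- the acceptance condition -/
def Phi (ρ : X → X → ℝ) (G : X → X → Prop) (M : Set X) : Prop :=
  (∀ a ∈ M, ∀ b, G a b → b ∈ M) ∧ ∀ z ∈ M,
    eSize ρ (M ∩ {y | G y y}) z ≤ eSize ρ (M \ {y | G y y}) z ∧
    eSize ρ (M \ {y | G y y}) z ≤ 2 * eSize ρ (M ∩ {y | G y y}) z

/-- `R` is obtained from `G` by a maximal disjoint family of accepted sets. -/
structure Step (E : X → X → Prop) (ρ : X → X → ℝ) (G R : X → X → Prop) : Prop where
  per : PER E R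
  acc : ∀ y, R y y → Phi ρ G {y' | R y y'}
  max : ∀ T : Set X, T.Finite → T.Nonempty → (∀ a ∈ T, ∀ b ∈ T, E a b) → Phi ρ G T →
    ∃ y ∈ T, R y y

theorem step [StandardBorelSpace X] {E G : X → X → Prop} {ρ : X → X → ℝ} (hE : IsCBER E)
    (hρ : IsCocycle E ρ) {g : ℕ → X → X} (hg : Enum E g) (hG : PER E G) :
    ∃ R, Step E ρ G R := by
  have hgE : ∀ n x, E x (g n x) := fun n x => (hg.iff _ _).2 ⟨n, rfl⟩
  have hSm : ∀ (l : Finset ℕ), Measurable fun p : X × X => p.2 ∈ kmS g l p.1 := by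
    intro l
    have : (fun p : X × X => p.2 ∈ kmS g l p.1) = fun p => ∃ i, i ∈ l ∧ g i p.1 = p.2 := rfl
    rw [this]
    exact Measurable.exists fun i => measurable_const.and
      (meas_eq ((hg.meas i).comp measurable_fst) measurable_snd)
  have hSE : ∀ l x y, y ∈ kmS g l x → E x y := by
    rintro l x y ⟨i, _, rfl⟩; exact hgE i x
  have hΦ : ∀ l : Finset ℕ, Measurable fun x => Phi ρ G (kmS g l x) := by
    intro l
    have : (fun x => Phi ρ G (kmS g l x)) = fun x => (∀ i, i ∈ l → ∀ b, E x b →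
        (G (g i x) b → b ∈ kmS g l x)) ∧ ∀ i, i ∈ l →
        eSize ρ {y | y ∈ kmS g l x ∧ G y y} (g i x) ≤
          eSize ρ {y | y ∈ kmS g l x ∧ ¬ G y y} (g i x) ∧
        eSize ρ {y | y ∈ kmS g l x ∧ ¬ G y y} (g i x) ≤
          2 * eSize ρ {y | y ∈ kmS g l x ∧ G y y} (g i x) := by
      ext x
      refine and_congr ?_ ?_
      · constructor
        · intro h i hi b _ hb
          exact h _ ⟨i, hi, rfl⟩ b hb
        · rintro h _ ⟨i, hi, rfl⟩ b hb
          exact h i hi b (hE.1.trans (hgE i x) (hG.sub _ _ hb)) hb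
      · constructor
        · intro h i hi
          exact h _ ⟨i, hi, rfl⟩
        · rintro h _ ⟨i, hi, rfl⟩
          exact h i hi
    rw [this]
    have hdm : Measurable fun p : X × X => G p.2 p.2 := hG.dom_meas.comp measurable_snd
    refine Measurable.and ?_ ?_
    · refine Measurable.forall fun i => Measurable.forall fun _ => ?_
      refine mAll hg (Q := fun x b => (G (g i x) b → b ∈ kmS g l x)) ?_ measurable_id
      exact (m2 hG.meas ((hg.meas i).comp measurable_fst) measurable_snd).imp (hSm l)
    · refine Measurable.forall fun i => Measurable.forall fun _ => ?_
      have s1 : Measurable fun x => eSize ρ {y | y ∈ kmS g l x ∧ G y y} (g i x) :=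
        mSize hg hρ (H := fun x y => y ∈ kmS g l x ∧ G y y) ((hSm l).and hdm) measurable_id
          (hg.meas i) (fun x y h => hSE _ _ _ h.1)
      have s2 : Measurable fun x => eSize ρ {y | y ∈ kmS g l x ∧ ¬ G y y} (g i x) :=
        mSize hg hρ (H := fun x y => y ∈ kmS g l x ∧ ¬ G y y) ((hSm l).and hdm.not) measurable_id
          (hg.meas i) (fun x y h => hSE _ _ _ h.1)
      exact (measurableSet_setOfPred.1 (measurableSet_le s1 s2)).and
        (measurableSet_setOfPred.1 (measurableSet_le s2 (s1.const_mul 2)))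
  obtain ⟨R, h1, h2, h3, h4, h5, h6⟩ := km hE hg (Phi ρ G) hΦ
  refine ⟨R, ⟨h1, h2, h3, h4, fun y => ?_⟩, fun y hy => (h5 y hy).2, h6⟩
  by_cases hy : R y y
  · exact (h5 y hy).1
  · have : {y' | R y y'} = ∅ := by
      ext y'
      simp only [mem_ofPred_eq, mem_empty_iff_false, iff_false]
      exact fun h => hy (h3 _ _ _ h (h2 _ _ h))
    rw [this]; exact finite_empty

theorem step_dens {E G R : X → X → Prop} {ρ : X → X → ℝ} (hE : IsCBER E)
    (hρ : IsCocycle E ρ) (hG : PER E G) (hs : Step E ρ G R) {A : Set X} {c : ℝ≥0∞}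
    (hd : Dens ρ A G c) : Dens ρ A R (3 * c) := by
  intro y
  by_cases hy : R y y
  · have hacc := hs.acc y hy
    set M := {y' | R y y'} with hM
    have h1 := (hacc.2 y hy).2
    have h2 := eSize_diff_add ρ M {y | G y y} y
    have h3 : eSize ρ (M ∩ {y | G y y}) y ≤ c * eSize ρ (M ∩ {y | G y y} ∩ A) y := by
      refine dens_inv hE hρ hG hd ((hs.per.fin y).subset inter_subset_left) ?_ ?_ ?_
      · rintro a ⟨ha, ha'⟩ b hb
        exact ⟨hacc.1 a ha b hb, hG.right hb⟩
      · exact fun a ha => ha.2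
      · exact fun a ha => hs.per.sub _ _ ha.1
    calc eSize ρ M y = eSize ρ (M ∩ {y | G y y}) y + eSize ρ (M \ {y | G y y}) y := h2.symm
      _ ≤ eSize ρ (M ∩ {y | G y y}) y + 2 * eSize ρ (M ∩ {y | G y y}) y := by gcongr
      _ = 3 * eSize ρ (M ∩ {y | G y y}) y := by ring
      _ ≤ 3 * (c * eSize ρ (M ∩ {y | G y y} ∩ A) y) := by gcongr
      _ ≤ 3 * (c * eSize ρ (M ∩ A) y) := by
        gcongr
        exact eSize_mono ρ (by rintro a ⟨⟨h1, _⟩, h2⟩; exact ⟨h1, h2⟩) y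
      _ = 3 * c * eSize ρ (M ∩ A) y := by ring
  · have : {y' | R y y'} = ∅ := by
      ext y'
      simp only [mem_ofPred_eq, mem_empty_iff_false, iff_false]
      exact fun h => hy (hs.per.left h)
    rw [this, eSize_empty]; exact zero_le

end PR


section DP
variable [MeasurableSpace X]

/-- the part where the domains increase -/
def DSet (E : X → X → Prop) (G : ℕ → X → X → Prop) : Set X :=
  {x | ∀ n, ∀ y, E x y → (G n y y → G (n + 1) y y)}

/-- level of a point -/
def Lev (G : ℕ → X → X → Prop) (n : ℕ) (x : X) : Prop := G n x x ∧ ∀ m < n, ¬ G m x x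

/-- the finite relation on the compressible part -/
def FD (E : X → X → Prop) (G : ℕ → X → X → Prop) (x y : X) : Prop :=
  x = y ∨ (x ∈ DSet E G ∧ y ∈ DSet E G ∧ ∃ n, Lev G n x ∧ Lev G n y ∧ G n x y)

theorem lev_uniq {G : ℕ → X → X → Prop} {n m : ℕ} {x : X} (h1 : Lev G n x) (h2 : Lev G m x) :
    n = m := by
  rcases lt_trichotomy n m with h | h | h
  · exact (h2.2 n h h1.1).elim
  · exact h
  · exact (h1.2 m h h2.1).elim

theorem dset_meas {E : X → X → Prop} {G : ℕ → X → X → Prop} {g : ℕ → X → X} (hg : Enum E g)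
    (hG : ∀ n, PER E (G n)) : MeasurableSet (DSet E G) := by
  refine measurableSet_setOfPred.2 (Measurable.forall fun n => ?_)
  refine mAll hg (Q := fun _ y => (G n y y → G (n + 1) y y)) ?_ measurable_id
  exact ((hG n).dom_meas.comp measurable_snd).imp ((hG (n + 1)).dom_meas.comp measurable_snd)

theorem dset_inv {E : X → X → Prop} (hE : IsCBER E) {G : ℕ → X → X → Prop} :
    EInvariant E (DSet E G) := by
  intro x y hxy hx n z hz
  exact hx n z (hE.1.trans hxy hz)

theorem fd_equiv {E : X → X → Prop} {G : ℕ → X → X → Prop}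
    (hG : ∀ n, PER E (G n)) : Equivalence (FD E G) := by
  refine ⟨fun x => Or.inl rfl, ?_, ?_⟩
  · rintro x y (rfl | ⟨h1, h2, n, h3, h4, h5⟩)
    · exact Or.inl rfl
    · exact Or.inr ⟨h2, h1, n, h4, h3, (hG n).symm _ _ h5⟩
  · rintro x y z (rfl | ⟨h1, h2, n, h3, h4, h5⟩) h
    · exact h
    · rcases h with rfl | ⟨k1, k2, m, k3, k4, k5⟩
      · exact Or.inr ⟨h1, h2, n, h3, h4, h5⟩
      · obtain rfl := lev_uniq h4 k3
        exact Or.inr ⟨h1, k2, n, h3, k4, (hG n).trans _ _ _ h5 k5⟩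

theorem lev_meas {E : X → X → Prop} {G : ℕ → X → X → Prop}
    (hG : ∀ n, PER E (G n)) (n : ℕ) : Measurable (Lev G n) :=
  (hG n).dom_meas.and (Measurable.forall fun m => Measurable.forall fun _ => (hG m).dom_meas.not)

theorem fd_fin [StandardBorelSpace X] {E : X → X → Prop} {G : ℕ → X → X → Prop}
    {g : ℕ → X → X} (hg : Enum E g)
    (hG : ∀ n, PER E (G n)) : IsFinSubequivOn E (DSet E G) (FD E G) := by
  refine ⟨fd_equiv hG, ?_, ?_, ?_⟩
  · refine measurableSet_setOfPred.2 ((meas_eq measurable_fst measurable_snd).or ?_)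
    have hD : Measurable fun x => x ∈ DSet E G := measurableSet_setOfPred.1 (dset_meas hg hG)
    refine (hD.comp measurable_fst).and ((hD.comp measurable_snd).and ?_)
    refine Measurable.exists fun n => ?_
    exact ((lev_meas hG n).comp measurable_fst).and
      (((lev_meas hG n).comp measurable_snd).and (hG n).meas)
  · rintro x y (rfl | ⟨h1, h2, n, h3, h4, h5⟩)
    · exact Or.inl rfl
    · exact Or.inr ⟨(hG n).sub _ _ h5, h1, h2⟩
  · intro x
    by_cases h : ∃ n, Lev G n x
    · obtain ⟨n, hn⟩ := h
      refine ((finite_singleton x).union ((hG n).fin x)).subset ?_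
      rintro y (rfl | ⟨h1, h2, m, h3, h4, h5⟩)
      · exact Or.inl rfl
      · obtain rfl := lev_uniq hn h3
        exact Or.inr h5
    · refine (finite_singleton x).subset ?_
      rintro y (rfl | ⟨h1, h2, m, h3, h4, h5⟩)
      · rfl
      · exact (h ⟨m, h3⟩).elim

theorem d_part [StandardBorelSpace X] {E : X → X → Prop} (hE : IsCBER E)
    {ρ : X → X → ℝ} (hρ : IsCocycle E ρ) {g : ℕ → X → X} (hg : Enum E g)
    {A : Set X} (hAcomp : ∀ x : X, ∃ y ∈ A, E x y) {G : ℕ → X → X → Prop}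
    (hG : ∀ n, PER E (G n)) (hG0 : ∀ x y, G 0 x y ↔ x = y ∧ x ∈ A)
    (hs : ∀ n, Step E ρ (G n) (G (n + 1))) :
    ∃ (F : X → X → Prop) (hF : Equivalence F), IsFinSubequivOn E (DSet E G) F ∧
        ∃ φ : Quotient (Setoid.mk F hF) → Quotient (Setoid.mk F hF),
          Measurable φ ∧ (∀ C', (φ ⁻¹' {C'}).Finite) ∧
          QuotCompressionOn E ρ (DSet E G) (Setoid.mk F hF) φ := by
  classical
  refine ⟨FD E G, fd_equiv hG, fd_fin hg hG, ?_⟩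
  set D := DSet E G with hD
  have hDm : Measurable fun x => x ∈ D := measurableSet_setOfPred.1 (dset_meas hg hG)
  have hDi : ∀ x y, E x y → x ∈ D → y ∈ D := fun x y h hx => dset_inv hE h hx
  let N : X → X → Prop := fun x y => x ∈ D ∧ ∃ n, Lev G n x ∧ G (n + 1) x y ∧ ¬ G n y y
  have hN : Measurable fun p : X × X => N p.1 p.2 := by
    refine (hDm.comp measurable_fst).and (Measurable.exists fun n => ?_)
    exact ((lev_meas hG n).comp measurable_fst).and ((hG (n + 1)).meas.and
      ((hG n).dom_meas.comp measurable_snd).not)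
  obtain ⟨f, hfm, hfE, hfN, hfid⟩ := pick hE hg hN
  have hmono : ∀ x ∈ D, ∀ n m, n ≤ m → G n x x → G m x x := by
    intro x hx n m hnm h
    induction hnm with
    | refl => exact h
    | step _ ih => exact hx _ x (hE.1.refl x) ih
  have hlev : ∀ x ∈ D, ∀ n, Lev G n x → G (n + 1) x (f x) ∧ Lev G (n + 1) (f x) := by
    intro x hx n hn
    have hxx : G (n + 1) x x := hmono x hx n (n + 1) (Nat.le_succ n) hn.1
    have hacc := ((hs n).acc x hxx).2 x hxx
    have hne : ∃ y, y ∈ {y' | G (n + 1) x y'} \ {y | G n y y} := by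
      by_contra hcon
      push Not at hcon
      have : {y' | G (n + 1) x y'} \ {y | G n y y} = ∅ := eq_empty_of_forall_notMem hcon
      rw [this, eSize_empty] at hacc
      have hpos : 0 < eSize ρ ({y' | G (n + 1) x y'} ∩ {y | G n y y}) x :=
        eSize_pos hρ (y := x) ⟨hxx, hn.1⟩ (hE.1.refl x)
      exact absurd hacc.1 (not_le.2 hpos)
    obtain ⟨y, hy1, hy2⟩ := hne
    obtain ⟨-, m, hm1, hm2, hm3⟩ := hfN x y ((hG _).sub _ _ hy1) ⟨hx, n, hn, hy1, hy2⟩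
    obtain rfl := lev_uniq hn hm1
    refine ⟨hm2, (hG _).right hm2, fun k hk hk' => hm3 ?_⟩
    exact hmono (f x) (hDi _ _ (hfE x) hx) k n (Nat.lt_succ_iff.1 hk) hk'
  have hnolev : ∀ x, (∀ n, ¬ Lev G n x) → f x = x := by
    intro x h
    refine hfid x fun y _ hy => ?_
    obtain ⟨-, n, hn, -⟩ := hy
    exact h n hn
  have hnoD : ∀ x, x ∉ D → f x = x := by
    intro x h
    exact hfid x fun y _ hy => h hy.1
  have hFlev : ∀ a x n, FD E G a x → Lev G n x → Lev G n a ∧ G n a x := by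
    rintro a x n (rfl | ⟨h1, h2, m, h3, h4, h5⟩) h
    · exact ⟨h, h.1⟩
    · obtain rfl := lev_uniq h h4
      exact ⟨h3, h5⟩
  have hFE : ∀ x y, FD E G x y → E x y := by
    rintro x y (rfl | ⟨h1, h2, m, h3, h4, h5⟩)
    · exact hE.1.refl x
    · exact (hG m).sub _ _ h5
  have hpre : ∀ x y, FD E G (f y) x → (y = x ∧ (x ∈ D → ∀ n, ¬ Lev G n x)) ∨
      (x ∈ D ∧ y ∈ D ∧ ∃ n, Lev G (n + 1) x ∧ Lev G n y ∧ G (n + 1) x y) := by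
    intro x y h
    have hyx : E y x := hE.1.trans (hfE y) (hFE _ _ h)
    by_cases hy : y ∈ D
    · have hx := hDi _ _ hyx hy
      by_cases hl : ∃ n, Lev G n y
      · obtain ⟨n, hn⟩ := hl
        right
        obtain ⟨k1, k2⟩ := hlev y hy n hn
        obtain ⟨k3, k4⟩ := hFlev x (f y) (n + 1) ((fd_equiv hG).symm h) k2
        exact ⟨hx, hy, n, k3, hn, (hG _).trans _ _ _ k4 ((hG _).symm _ _ k1)⟩
      · push Not at hl
        left
        rw [hnolev y hl] at h
        rcases h with rfl | ⟨h1, h2, m, h3, h4, h5⟩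
        · exact ⟨rfl, fun _ => hl⟩
        · exact (hl m h3).elim
    · left
      rw [hnoD y hy] at h
      rcases h with rfl | ⟨h1, h2, m, h3, h4, h5⟩
      · exact ⟨rfl, fun h => (hy h).elim⟩
      · exact (hy h1).elim
  have hresp : ∀ x x', FD E G x x' → FD E G (f x) (f x') := by
    rintro x x' (rfl | ⟨h1, h2, n, h3, h4, h5⟩)
    · exact Or.inl rfl
    · obtain ⟨a1, a2⟩ := hlev x h1 n h3
      obtain ⟨b1, b2⟩ := hlev x' h2 n h4
      refine Or.inr ⟨hDi _ _ (hfE x) h1, hDi _ _ (hfE x') h2, n + 1, a2, b2, ?_⟩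
      have hxx := (hG _).left a1
      have hxx' : G (n + 1) x x' := ((hs n).acc x hxx).1 x hxx x' h5
      exact (hG _).trans _ _ _ ((hG _).symm _ _ a1) ((hG _).trans _ _ _ hxx' b1)
  let s : Setoid X := Setoid.mk (FD E G) (fd_equiv hG)
  let φ : Quotient s → Quotient s := Quotient.map f fun x x' h => hresp x x' h
  have hφ : ∀ x y, φ (Quotient.mk s x) = Quotient.mk s y ↔ FD E G (f x) y := by
    intro x y
    exact Quotient.eq (r := s)
  refine ⟨φ, ?_, ?_, ?_, ?_, ?_⟩
  · refine measurable_from_quotient.2 ?_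
    exact (measurable_quotient_mk'' (s := s)).comp hfm
  · intro C'
    induction C' using Quotient.inductionOn with
    | h x =>
      have hfin : {y | FD E G (f y) x}.Finite := by
        by_cases h : ∃ n, Lev G (n + 1) x
        · obtain ⟨n, hn⟩ := h
          refine ((finite_singleton x).union ((hG (n + 1)).fin x)).subset ?_
          intro y hy
          rcases hpre x y hy with ⟨rfl, _⟩ | ⟨_, _, m, hm, _, h⟩
          · exact Or.inl rfl
          · obtain rfl : n = m := by have := lev_uniq hn hm; omega
            exact Or.inr h
        · refine (finite_singleton x).subset ?_
          intro y hy
          rcases hpre x y hy with ⟨rfl, _⟩ | ⟨_, _, m, hm, _, h'⟩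
          · rfl
          · exact (h ⟨m, hm⟩).elim
      refine (hfin.image (Quotient.mk s)).subset ?_
      intro q hq
      induction q using Quotient.inductionOn with
      | h y => exact ⟨y, (hφ y x).1 hq, rfl⟩
  · intro x hx y hy
    have h := (hφ x y).1 hy
    have hxy := hE.1.trans (hfE x) (hFE _ _ h)
    exact ⟨hxy, hDi _ _ hxy hx⟩
  · intro x hx
    refine ENNReal.div_le_of_le_mul ?_
    rw [one_mul]
    by_cases h : ∃ n, Lev G (n + 1) x
    · obtain ⟨n, hn⟩ := h
      have hacc := (((hs n).acc x hn.1).2 x hn.1).1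
      refine (eSize_mono ρ ?_ x).trans (hacc.trans (eSize_mono ρ ?_ x))
      · rintro y ⟨_, hy⟩
        rcases hpre x y ((hφ y x).1 hy) with ⟨rfl, h⟩ | ⟨_, _, m, hm, hm', h⟩
        · exact (h hx _ hn).elim
        · obtain rfl : n = m := by have := lev_uniq hn hm; omega
          exact ⟨h, hm'.1⟩
      · rintro y ⟨hy1, hy2⟩
        have hyD := hDi _ _ ((hG _).sub _ _ hy1) hx
        refine Or.inr ⟨hyD, hx, n + 1, ⟨(hG _).right hy1, fun k hk hk' => hy2 ?_⟩, hn,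
          (hG _).symm _ _ hy1⟩
        exact hmono y hyD k n (Nat.lt_succ_iff.1 hk) hk'
    · refine eSize_mono ρ ?_ x
      rintro y ⟨_, hy⟩
      rcases hpre x y ((hφ y x).1 hy) with ⟨rfl, _⟩ | ⟨_, _, m, hm, _, h'⟩
      · exact Or.inl rfl
      · exact (h ⟨m, hm⟩).elim
  · intro x hx
    obtain ⟨a, ha, hxa⟩ := hAcomp x
    have haD := hDi _ _ hxa hx
    have hl : Lev G 0 a := ⟨(hG0 a a).2 ⟨rfl, ha⟩, fun m hm => absurd hm (Nat.not_lt_zero m)⟩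
    refine ⟨a, haD, hxa, ?_⟩
    have : {z | z ∈ D ∧ φ (Quotient.mk s z) = Quotient.mk s a} = ∅ := by
      refine eq_empty_of_forall_notMem ?_
      rintro y ⟨_, hy⟩
      rcases hpre a y ((hφ y a).1 hy) with ⟨rfl, h⟩ | ⟨_, _, m, hm, _, h'⟩
      · exact h haD 0 hl
      · have := lev_uniq hl hm
        omega
    rw [relSize, this, eSize_empty, ENNReal.zero_div]
    exact zero_lt_one

end DP


section CB
variable [MeasurableSpace X]

theorem eSize_le_of_finset {ρ : X → X → ℝ} {Y : Set X} {z : X} {c : ℝ≥0∞}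
    (h : ∀ t : Finset X, (t : Set X) ⊆ Y → eSize ρ t z ≤ c) : eSize ρ Y z ≤ c := by
  classical
  rw [eSize, ENNReal.tsum_eq_iSup_sum]
  refine iSup_le fun s => ?_
  refine le_trans (le_of_eq ?_) (h (s.image Subtype.val) ?_)
  · rw [eSize, Finset.tsum_subtype' (s.image Subtype.val) (fun y => ENNReal.ofReal (ρ y z)),
      Finset.sum_image (fun a _ b _ h => Subtype.ext h)]
  · intro y hy
    obtain ⟨a, _, rfl⟩ := Finset.mem_image.1 (Finset.mem_coe.1 hy)
    exact a.2

/-- leftover points of the domain -/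
def LP (G R : X → X → Prop) (y : X) : Prop := G y y ∧ ¬ R y y
/-- leftover points off the domain -/
def LL (G R : X → X → Prop) (y : X) : Prop := ¬ G y y ∧ ¬ R y y
/-- size of the class of `p` -/
noncomputable def sz (ρ : X → X → ℝ) (G : X → X → Prop) (p z : X) : ℝ≥0∞ := eSize ρ {y | G p y} z

variable {E G R : X → X → Prop} {ρ : X → X → ℝ}

theorem sz_base (hE : IsCBER E) (hρ : IsCocycle E ρ) (hG : PER E G) {p z z' : X} (h : E z z')
    (hp : E z p) : sz ρ G p z' = sz ρ G p z * ENNReal.ofReal (ρ z z') :=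
  eSize_base hE hρ h fun y hy => hE.1.trans hp (hG.sub _ _ hy)

theorem ofr_base (hE : IsCBER E) (hρ : IsCocycle E ρ) {y z z' : X} (h : E z z')
    (hy : E z y) : ENNReal.ofReal (ρ y z') = ENNReal.ofReal (ρ y z) * ENNReal.ofReal (ρ z z') := by
  rw [hρ.2.2 (hE.1.symm hy) h, ENNReal.ofReal_mul (hρ.2.1 (hE.1.symm hy)).le]

theorem ofr_one (hE : IsCBER E) (hρ : IsCocycle E ρ) (z : X) : ENNReal.ofReal (ρ z z) = 1 := by
  rw [coc_one hE hρ]; simp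

theorem one_le_base (hE : IsCBER E) (hρ : IsCocycle E ρ) (hG : PER E G) {l p z : X} (h : E l z)
    (hp : E l p) : 1 ≤ sz ρ G p l ↔ ENNReal.ofReal (ρ l z) ≤ sz ρ G p z := by
  rw [sz_base hE hρ hG h hp]
  have h1 := (coc_pos hρ h).ne'
  constructor
  · intro h2
    calc ENNReal.ofReal (ρ l z) = 1 * ENNReal.ofReal (ρ l z) := (one_mul _).symm
      _ ≤ _ := by gcongr
  · intro h2
    rw [← ENNReal.mul_le_mul_iff_left h1 ENNReal.ofReal_ne_top, one_mul]
    exact h2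

theorem lp_inv (hG : PER E G) (hs : Step E ρ G R) {a b : X} (ha : LP G R a) (h : G a b) :
    LP G R b := by
  refine ⟨hG.right h, fun hb => ha.2 ?_⟩
  exact hs.per.right ((hs.acc b hb).1 b hb a (hG.symm _ _ h))

theorem no_pair (hE : IsCBER E) (hρ : IsCocycle E ρ) (hG : PER E G) (hs : Step E ρ G R)
    {S T : Set X} {z : X} (hS : S.Finite) (hT : T.Finite) (hne : (S ∪ T).Nonempty)
    (hSP : ∀ a ∈ S, LP G R a) (hSi : ∀ a ∈ S, ∀ b, G a b → b ∈ S) (hTL : ∀ a ∈ T, LL G R a)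
    (hSE : ∀ a ∈ S, E z a) (hTE : ∀ a ∈ T, E z a)
    (h1 : eSize ρ S z ≤ eSize ρ T z) (h2 : eSize ρ T z ≤ 2 * eSize ρ S z) : False := by
  have hE' : ∀ a ∈ S ∪ T, E z a := by
    rintro a (h | h)
    exacts [hSE a h, hTE a h]
  have e1 : (S ∪ T) ∩ {y | G y y} = S := by
    ext y
    constructor
    · rintro ⟨h | h, h'⟩
      · exact h
      · exact ((hTL y h).1 h').elim
    · intro h
      exact ⟨Or.inl h, (hSP y h).1⟩
  have e2 : (S ∪ T) \ {y | G y y} = T := by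
    ext y
    constructor
    · rintro ⟨h | h, h'⟩
      · exact (h' (hSP y h).1).elim
      · exact h
    · intro h
      exact ⟨Or.inr h, (hTL y h).1⟩
  obtain ⟨y, hy, hR⟩ := hs.max (S ∪ T) (hS.union hT) hne
    (fun a ha b hb => hE.1.trans (hE.1.symm (hE' a ha)) (hE' b hb)) (by
      refine ⟨?_, fun w hw => ?_⟩
      · rintro a (h | h) b hb
        · exact Or.inl (hSi a h b hb)
        · exact ((hTL a h).1 (hG.left hb)).elim
      · rw [e1, e2]
        refine ⟨?_, eSize_le_base hE hρ (hE' w hw) hTE hSE 2 h2⟩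
        have := eSize_le_base hE hρ (hE' w hw) hSE hTE 1 (by rwa [one_mul])
        rwa [one_mul] at this)
  rcases hy with h | h
  · exact (hSP y h).2 hR
  · exact (hTL y h).2 hR

theorem v1 (hE : IsCBER E) (hρ : IsCocycle E ρ) (hG : PER E G) (hs : Step E ρ G R) {l : X}
    (hl : LL G R l) (h : ∀ p, E l p → LP G R p → sz ρ G p l < 1) :
    eSize ρ {y | E l y ∧ LP G R y} l ≤ 1 / 2 := by
  classical
  have hone : eSize ρ {l} l = 1 := by rw [eSize_singleton, ofr_one hE hρ]
  -- dichotomy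
  have hdi : ∀ S : Set X, S.Finite → (∀ a ∈ S, LP G R a) → (∀ a ∈ S, ∀ b, G a b → b ∈ S) →
      (∀ a ∈ S, E l a) → eSize ρ S l ≤ 1 → eSize ρ S l < 1 / 2 := by
    intro S h1 h2 h3 h4 h5
    by_contra hcon
    push Not at hcon
    refine no_pair hE hρ hG hs (S := S) (T := {l}) (z := l) h1 (finite_singleton l) ⟨l, Or.inr rfl⟩
      h2 h3 (by rintro a rfl; exact hl) h4 (by rintro a rfl; exact hE.1.refl _) ?_ ?_
    · rw [hone]; exact h5
    · rw [hone]
      calc (1 : ℝ≥0∞) = 2 * (1 / 2) := by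
            rw [one_div, ENNReal.mul_inv_cancel (by norm_num) (by norm_num)]
        _ ≤ _ := by gcongr
  have key : ∀ t : Finset X, (∀ a ∈ t, E l a ∧ LP G R a) →
      eSize ρ {y | ∃ a ∈ t, G a y} l < 1 / 2 := by
    intro t
    induction t using Finset.induction_on with
    | empty => intro _; simp [eSize_empty]
    | insert a t ha ih =>
      intro ht
      have ih' := ih fun a ha => ht a (Finset.mem_insert_of_mem ha)
      have ha' := ht a (Finset.mem_insert_self _ _)
      have hsub : {y | ∃ b ∈ insert a t, G b y} ⊆ {y | G a y} ∪ {y | ∃ b ∈ t, G b y} := by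
        rintro y ⟨b, hb, hby⟩
        rcases Finset.mem_insert.1 hb with rfl | hb
        · exact Or.inl hby
        · exact Or.inr ⟨b, hb, hby⟩
      have hcl : eSize ρ {y | G a y} l < 1 / 2 := by
        refine hdi _ (hG.fin a) (fun b hb => lp_inv hG hs ha'.2 hb)
          (fun b hb c hc => hG.trans _ _ _ hb hc)
          (fun b hb => hE.1.trans ha'.1 (hG.sub _ _ hb)) (h a ha'.1 ha'.2).le
      refine hdi _ ?_ ?_ ?_ ?_ ?_
      · have hfin : ({y | ∃ b ∈ insert a t, G b y}) = ⋃ b ∈ insert a t, {y | G b y} := by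
          ext y; simp
        rw [hfin]
        exact Set.Finite.biUnion (insert a t).finite_toSet fun b _ => hG.fin b
      · rintro y ⟨b, hb, hby⟩
        exact lp_inv hG hs (ht b hb).2 hby
      · rintro y ⟨b, hb, hby⟩ w hw
        exact ⟨b, hb, hG.trans _ _ _ hby hw⟩
      · rintro y ⟨b, hb, hby⟩
        exact hE.1.trans (ht b hb).1 (hG.sub _ _ hby)
      · calc _ ≤ eSize ρ ({y | G a y} ∪ {y | ∃ b ∈ t, G b y}) l := eSize_mono ρ hsub l
          _ ≤ eSize ρ {y | G a y} l + eSize ρ {y | ∃ b ∈ t, G b y} l := eSize_union_le ρ _ _ l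
          _ ≤ 1 / 2 + 1 / 2 := add_le_add hcl.le ih'.le
          _ = 1 := ENNReal.add_halves 1
  refine eSize_le_of_finset fun t ht => ?_
  refine le_trans (eSize_mono ρ ?_ l) (key t fun a ha => ht ha).le
  intro a ha
  exact ⟨a, ha, (ht ha).2.1⟩

theorem v2 (hE : IsCBER E) (hρ : IsCocycle E ρ) (hG : PER E G) (hs : Step E ρ G R) {p : X}
    (hp : LP G R p) :
    eSize ρ {y | E p y ∧ LL G R y ∧ ENNReal.ofReal (ρ y p) ≤ sz ρ G p p} p ≤ sz ρ G p p := by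
  classical
  have hpos : 0 < sz ρ G p p := eSize_pos hρ hp.1 (hE.1.refl p)
  have key : ∀ t : Finset X, (∀ y ∈ t, E p y ∧ LL G R y ∧ ENNReal.ofReal (ρ y p) ≤ sz ρ G p p) →
      eSize ρ (t : Set X) p < sz ρ G p p := by
    intro t
    induction t using Finset.induction_on with
    | empty => intro _; simpa [eSize_empty] using hpos
    | insert a t ha ih =>
      intro ht
      have ih' := ih fun a ha => ht a (Finset.mem_insert_of_mem ha)
      have ha' := ht a (Finset.mem_insert_self _ _)
      by_contra hcon
      push Not at hcon
      refine no_pair hE hρ hG hs (S := {y | G p y}) (T := ((insert a t : Finset X) : Set X))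
        (z := p) (hG.fin p) (Finset.finite_toSet _) ⟨p, Or.inl hp.1⟩
        (fun b hb => lp_inv hG hs hp hb) (fun b hb c hc => hG.trans _ _ _ hb hc)
        (fun b hb => (ht b hb).2.1) (fun b hb => hG.sub _ _ hb) (fun b hb => (ht b hb).1) hcon ?_
      calc eSize ρ ((insert a t : Finset X) : Set X) p = eSize ρ ({a} ∪ (t : Set X)) p := by
            rw [Finset.coe_insert, insert_eq]
        _ ≤ eSize ρ {a} p + eSize ρ (t : Set X) p := eSize_union_le ρ _ _ p
        _ ≤ sz ρ G p p + sz ρ G p p := by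
            rw [eSize_singleton]; exact add_le_add ha'.2.2 ih'.le
        _ = 2 * sz ρ G p p := (two_mul _).symm
  exact eSize_le_of_finset fun t ht => (key t fun a ha => ht ha).le

end CB


section CC
variable [MeasurableSpace X]

/-- `p` is an optimal choice for `l` -/
def Opt (E : X → X → Prop) (ρ : X → X → ℝ) (G R : X → X → Prop) (l p : X) : Prop :=
  LL G R l ∧ LP G R p ∧ 1 ≤ sz ρ G p l ∧ ∀ p', E l p' → (LP G R p' → 1 ≤ sz ρ G p' l →
    ∀ l', E l l' → (LL G R l' → ¬ (sz ρ G p' l < ENNReal.ofReal (ρ l' l) ∧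
      ENNReal.ofReal (ρ l' l) ≤ sz ρ G p l)))

variable {E G R : X → X → Prop} {ρ : X → X → ℝ}

theorem sz_meas [StandardBorelSpace X] {g : ℕ → X → X} (hg : Enum E g)
    (hρ : IsCocycle E ρ) (hG : PER E G) {T : Type*} [MeasurableSpace T] {a b : T → X}
    (ha : Measurable a) (hb : Measurable b) : Measurable fun t => sz ρ G (a t) (b t) :=
  mSize hg hρ (H := fun t y => G (a t) y) (m2 hG.meas (ha.comp measurable_fst) measurable_snd)
    ha hb fun _ _ h => hG.sub _ _ h

theorem lp_meas (hG : PER E G) (hs : Step E ρ G R) : Measurable (LP G R) :=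
  hG.dom_meas.and hs.per.dom_meas.not

theorem ll_meas (hG : PER E G) (hs : Step E ρ G R) : Measurable (LL G R) :=
  hG.dom_meas.not.and hs.per.dom_meas.not

theorem opt_meas [StandardBorelSpace X] {g : ℕ → X → X} (hg : Enum E g)
    (hρ : IsCocycle E ρ) (hG : PER E G) (hs : Step E ρ G R) :
    Measurable fun q : X × X => Opt E ρ G R q.1 q.2 := by
  have hP := lp_meas hG hs
  have hL := ll_meas hG hs
  refine (hL.comp measurable_fst).and ((hP.comp measurable_snd).and (Measurable.and ?_ ?_))
  · exact measurableSet_setOfPred.1 (measurableSet_le measurable_const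
      (sz_meas hg hρ hG measurable_snd measurable_fst))
  · refine mAll hg (Q := fun (q : X × X) p' => (LP G R p' → 1 ≤ sz ρ G p' q.1 →
      ∀ l', E q.1 l' → (LL G R l' → ¬ (sz ρ G p' q.1 < ENNReal.ofReal (ρ l' q.1) ∧
      ENNReal.ofReal (ρ l' q.1) ≤ sz ρ G q.2 q.1)))) ?_ measurable_fst
    have m1 : Measurable fun r : (X × X) × X => r.1.1 := measurable_fst.comp measurable_fst
    refine (hP.comp measurable_snd).imp (Measurable.imp ?_ ?_)
    · exact measurableSet_setOfPred.1 (measurableSet_le measurable_const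
        (sz_meas hg hρ hG measurable_snd m1))
    · refine mAll hg (Q := fun (r : (X × X) × X) l' => (LL G R l' →
        ¬ (sz ρ G r.2 r.1.1 < ENNReal.ofReal (ρ l' r.1.1) ∧
        ENNReal.ofReal (ρ l' r.1.1) ≤ sz ρ G r.1.2 r.1.1))) ?_ m1
      have n1 : Measurable fun r : ((X × X) × X) × X => r.1.1.1 := m1.comp measurable_fst
      have n2 : Measurable fun r : ((X × X) × X) × X => r.1.1.2 :=
        (measurable_snd.comp measurable_fst).comp measurable_fst
      have n3 : Measurable fun r : ((X × X) × X) × X => r.1.2 := measurable_snd.comp measurable_fst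
      have hr : Measurable fun r : ((X × X) × X) × X => ENNReal.ofReal (ρ r.2 r.1.1.1) :=
        (hρ.1.comp (measurable_snd.prodMk n1)).ennreal_ofReal
      refine (hL.comp measurable_snd).imp (Measurable.not (Measurable.and ?_ ?_))
      · exact measurableSet_setOfPred.1 (measurableSet_lt (sz_meas hg hρ hG n3 n1) hr)
      · exact measurableSet_setOfPred.1 (measurableSet_le hr (sz_meas hg hρ hG n2 n1))

theorem opt_exists (hE : IsCBER E) (hρ : IsCocycle E ρ) (hG : PER E G) (hs : Step E ρ G R)
    {l p : X} (hl : LL G R l) (hlp : E l p) (hp : LP G R p) (h1 : 1 ≤ sz ρ G p l) :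
    ∃ p, E l p ∧ Opt E ρ G R l p := by
  classical
  let Z : X → Set X := fun p => {l' | E l l' ∧ LL G R l' ∧ 1 ≤ ENNReal.ofReal (ρ l' l) ∧
    ENNReal.ofReal (ρ l' l) ≤ sz ρ G p l}
  have hZ : ∀ p, E l p → LP G R p → (Z p).Finite := by
    intro p hlp hp
    have h2 := v2 hE hρ hG hs hp
    have h3 : eSize ρ {y | E p y ∧ LL G R y ∧ ENNReal.ofReal (ρ y p) ≤ sz ρ G p p} l ≠ ⊤ := by
      rw [eSize_base hE hρ (hE.1.symm hlp) (fun y hy => hy.1)]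
      exact ENNReal.mul_ne_top (ne_top_of_le_ne_top (eSize_finite ρ (hG.fin p) p) h2)
        ENNReal.ofReal_ne_top
    have h4 := ENNReal.finite_const_le_of_tsum_ne_top h3 (ε := 1) one_ne_zero
    refine (h4.image Subtype.val).subset ?_
    rintro y ⟨a1, a2, a3, a4⟩
    refine ⟨⟨y, hE.1.trans (hE.1.symm hlp) a1, a2, ?_⟩, a3, rfl⟩
    rw [ofr_base hE hρ hlp a1, sz_base hE hρ hG hlp hlp]
    gcongr
  have hne : {p | E l p ∧ LP G R p ∧ 1 ≤ sz ρ G p l}.Nonempty := ⟨p, hlp, hp, h1⟩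
  obtain ⟨q, ⟨hq1, hq2, hq3⟩, hqmin⟩ :=
    exists_minimalFor_of_wellFoundedLT _ (fun p => (Z p).ncard) hne
  refine ⟨q, hq1, hl, hq2, hq3, ?_⟩
  rintro p' hp' hP' h1' l' hl' hL' ⟨b1, b2⟩
  have hss : Z p' ⊂ Z q := by
    refine ⟨fun y hy => ⟨hy.1, hy.2.1, hy.2.2.1, hy.2.2.2.trans (b1.le.trans b2)⟩, fun hsub => ?_⟩
    have : l' ∈ Z p' := hsub ⟨hl', hL', h1'.trans b1.le, b2⟩
    exact absurd this.2.2.2 (not_le.2 b1)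
  have hlt := ncard_lt_ncard hss (hZ q hq1 hq2)
  exact absurd (hqmin ⟨hp', hP', h1'⟩ hlt.le) (not_le.2 hlt)

theorem opt_congr (hG : PER E G) (hs : Step E ρ G R) {l p q : X} (h : Opt E ρ G R l p)
    (hpq : G p q) : Opt E ρ G R l q := by
  obtain ⟨h1, h2, h3, h4⟩ := h
  have e : ∀ z, sz ρ G q z = sz ρ G p z := by
    intro z; rw [sz, sz, hG.class_eq hpq]
  refine ⟨h1, lp_inv hG hs h2 hpq, by rwa [e], ?_⟩
  intro p' a1 a2 a3 l' a4 a5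
  rw [e]
  exact h4 p' a1 a2 a3 l' a4 a5

theorem opt_fin (hE : IsCBER E) (hρ : IsCocycle E ρ) (hG : PER E G) (hs : Step E ρ G R)
    {p : X} (hp : LP G R p)
    (hsm : ∀ l, E p l → LL G R l → ∃ p', E l p' ∧ LP G R p' ∧ sz ρ G p' l < 1) :
    {l | E p l ∧ Opt E ρ G R l p}.Finite ∧
      eSize ρ {l | E p l ∧ Opt E ρ G R l p} p ≤ sz ρ G p p := by
  have hsub : ∀ l, E p l → Opt E ρ G R l p → ENNReal.ofReal (ρ l p) ≤ sz ρ G p p := by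
    intro l h1 h2
    exact (one_le_base hE hρ hG (hE.1.symm h1) (hE.1.symm h1)).1 h2.2.2.1
  have hv2 := v2 hE hρ hG hs hp
  refine ⟨?_, le_trans (eSize_mono ρ ?_ p) hv2⟩
  · by_cases hne : ∃ l1, E p l1 ∧ Opt E ρ G R l1 p
    · obtain ⟨l1, e1, o1⟩ := hne
      obtain ⟨p', e', P', lt'⟩ := hsm l1 e1 o1.1
      have hfin : eSize ρ {y | E p y ∧ LL G R y ∧ ENNReal.ofReal (ρ y p) ≤ sz ρ G p p} p ≠ ⊤ :=
        ne_top_of_le_ne_top (eSize_finite ρ (hG.fin p) p) hv2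
      have epp' : E p p' := hE.1.trans e1 e'
      have hpos : sz ρ G p' p ≠ 0 := (eSize_pos hρ P'.1 (hE.1.symm epp')).ne'
      have h4 := ENNReal.finite_const_le_of_tsum_ne_top hfin hpos
      refine (h4.image Subtype.val).subset ?_
      rintro l ⟨e2, o2⟩
      refine ⟨⟨l, e2, o2.1, hsub l e2 o2⟩, ?_, rfl⟩
      have elp' : E l p' := hE.1.trans (hE.1.symm e2) epp'
      have ell1 : E l l1 := hE.1.trans (hE.1.symm e2) e1
      have hlt : sz ρ G p' l < 1 := by
        by_contra hcon
        push Not at hcon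
        refine o2.2.2.2 p' elp' P' hcon l1 ell1 o1.1 ⟨?_, ?_⟩
        · have := (one_le_base hE hρ hG (hE.1.symm ell1) e').not.1 (not_le.2 lt')
          exact not_le.1 this
        · exact (one_le_base hE hρ hG (hE.1.symm ell1) (hE.1.symm e1)).1 o1.2.2.1
      have := (one_le_base hE hρ hG (hE.1.symm e2) elp').not.1 (not_le.2 hlt)
      exact (not_le.1 this).le
    · have : {l | E p l ∧ Opt E ρ G R l p} = ∅ :=
        eq_empty_of_forall_notMem fun l hl => hne ⟨l, hl⟩
      rw [this]; exact finite_empty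
  · rintro l ⟨h1, h2⟩
    exact ⟨h1, h2.1, hsub l h1 h2⟩

theorem c_part [StandardBorelSpace X] {g : ℕ → X → X} (hg : Enum E g) (hE : IsCBER E)
    (hρ : IsCocycle E ρ) (hG : PER E G) (hs : Step E ρ G R) {A W : Set X}
    (hW : MeasurableSet W) (hWi : EInvariant E W) {c : ℝ≥0∞} (hdG : Dens ρ A G c)
    (hdR : Dens ρ A R (3 * c))
    (hbig : ∀ l ∈ W, LL G R l → ∃ p, E l p ∧ LP G R p ∧ 1 ≤ sz ρ G p l)
    (hsm : ∀ l ∈ W, LL G R l → ∃ p, E l p ∧ LP G R p ∧ sz ρ G p l < 1) :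
    ∃ F, IsFinSubequivOn E W F ∧ ∀ x ∈ W,
      eSize ρ {y | F y x} x ≤ 3 * c * eSize ρ (A ∩ {y | F y x}) x := by
  obtain ⟨h, hm, hhE, hhO, hhid⟩ := pick hE hg (opt_meas hg hρ hG hs)
  have hO : ∀ l ∈ W, LL G R l → Opt E ρ G R l (h l) := by
    intro l hl hL
    obtain ⟨p, a1, a2, a3⟩ := hbig l hl hL
    obtain ⟨q, b1, b2⟩ := opt_exists hE hρ hG hs hL a1 a2 a3
    exact hhO l q b1 b2
  have hid : ∀ x, G x x → h x = x := by
    intro x hx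
    exact hhid x fun y _ hy => hy.1.1 hx
  have hhP : ∀ x ∈ W, ¬ R x x → LP G R (h x) := by
    intro x hx hR
    by_cases hGx : G x x
    · rw [hid x hGx]; exact ⟨hGx, hR⟩
    · exact (hO x hx ⟨hGx, hR⟩).2.1
  let F : X → X → Prop := fun x y => x = y ∨ (x ∈ W ∧ y ∈ W ∧
    (R x y ∨ (¬ R x x ∧ ¬ R y y ∧ G (h x) (h y))))
  have hFE : ∀ x y, F x y → E x y := by
    rintro x y (rfl | ⟨h1, h2, h3 | ⟨h3, h4, h5⟩⟩)
    · exact hE.1.refl x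
    · exact hs.per.sub _ _ h3
    · exact hE.1.trans (hhE x) (hE.1.trans (hG.sub _ _ h5) (hE.1.symm (hhE y)))
  have hFeq : Equivalence F := by
    refine ⟨fun x => Or.inl rfl, ?_, ?_⟩
    · rintro x y (rfl | ⟨h1, h2, h3 | ⟨h3, h4, h5⟩⟩)
      · exact Or.inl rfl
      · exact Or.inr ⟨h2, h1, Or.inl (hs.per.symm _ _ h3)⟩
      · exact Or.inr ⟨h2, h1, Or.inr ⟨h4, h3, hG.symm _ _ h5⟩⟩
    · rintro x y z hxy (rfl | ⟨k1, k2, k3⟩)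
      · exact hxy
      rcases hxy with rfl | ⟨h1, h2, h3⟩
      · exact Or.inr ⟨k1, k2, k3⟩
      refine Or.inr ⟨h1, k2, ?_⟩
      rcases h3 with h3 | ⟨h3, h4, h5⟩ <;> rcases k3 with k3 | ⟨k3, k4, k5⟩
      · exact Or.inl (hs.per.trans _ _ _ h3 k3)
      · exact (k3 (hs.per.right h3)).elim
      · exact (h4 (hs.per.left k3)).elim
      · exact Or.inr ⟨h3, k4, hG.trans _ _ _ h5 k5⟩
  have hcR : ∀ x ∈ W, R x x → {y | F y x} = {y | R x y} := by
    intro x hx hR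
    ext y
    constructor
    · rintro (rfl | ⟨h1, h2, h3 | ⟨h3, h4, h5⟩⟩)
      · exact hR
      · exact hs.per.symm _ _ h3
      · exact (h4 hR).elim
    · intro hy
      exact Or.inr ⟨hWi (hs.per.sub _ _ hy) hx, hx, Or.inl (hs.per.symm _ _ hy)⟩
  have hcsub : ∀ x ∈ W, ¬ R x x → {y | F y x} ⊆
      {y | G (h x) y} ∪ {l | E (h x) l ∧ Opt E ρ G R l (h x)} := by
    intro x hx hR y hy
    have hy' : y ∈ W ∧ ¬ R y y ∧ G (h x) (h y) := by
      rcases hy with rfl | ⟨h1, h2, h3 | ⟨h3, h4, h5⟩⟩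
      · exact ⟨hx, hR, (hhP _ hx hR).1⟩
      · exact (hR (hs.per.right h3)).elim
      · exact ⟨h1, h3, hG.symm _ _ h5⟩
    obtain ⟨a1, a2, a3⟩ := hy'
    by_cases hGy : G y y
    · left
      rw [hid y hGy] at a3
      exact a3
    · right
      refine ⟨hE.1.trans (hG.sub _ _ a3) (hE.1.symm (hhE y)), ?_⟩
      exact opt_congr hG hs (hO y a1 ⟨hGy, a2⟩) (hG.symm _ _ a3)
  have hcsup : ∀ x ∈ W, ¬ R x x → {y | G (h x) y} ⊆ {y | F y x} := by
    intro x hx hR y hy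
    have hy : G (h x) y := hy
    have hP := lp_inv hG hs (hhP x hx hR) hy
    refine Or.inr ⟨?_, hx, Or.inr ⟨hP.2, hR, ?_⟩⟩
    · exact hWi (hE.1.trans (hhE x) (hG.sub _ _ hy)) hx
    · rw [hid y hP.1]; exact hG.symm _ _ hy
  have hof : ∀ x ∈ W, ¬ R x x → _ := fun x hx hR =>
    opt_fin hE hρ hG hs (hhP x hx hR) (fun l hl => hsm l (hWi (hE.1.trans (hhE x) hl) hx))
  have hWm : Measurable fun x => x ∈ W := measurableSet_setOfPred.1 hW
  refine ⟨F, ⟨hFeq, ?_, ?_, ?_⟩, ?_⟩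
  · refine measurableSet_setOfPred.2 ((meas_eq measurable_fst measurable_snd).or ?_)
    refine (hWm.comp measurable_fst).and ((hWm.comp measurable_snd).and (hs.per.meas.or ?_))
    refine (hs.per.dom_meas.comp measurable_fst).not.and
      ((hs.per.dom_meas.comp measurable_snd).not.and ?_)
    exact m2 hG.meas (hm.comp measurable_fst) (hm.comp measurable_snd)
  · intro x y hxy
    rcases hxy with rfl | hxy
    · exact Or.inl rfl
    · exact Or.inr ⟨hFE x y (Or.inr hxy), hxy.1, hxy.2.1⟩
  · intro x
    have hsw : {y | F x y} = {y | F y x} := by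
      ext y; exact ⟨fun h => hFeq.symm h, fun h => hFeq.symm h⟩
    rw [hsw]
    by_cases hx : x ∈ W
    · by_cases hR : R x x
      · rw [hcR x hx hR]; exact hs.per.fin x
      · exact ((hG.fin (h x)).union (hof x hx hR).1).subset (hcsub x hx hR)
    · refine (finite_singleton x).subset ?_
      rintro y (rfl | h')
      · rfl
      · exact (hx h'.2.1).elim
  · intro x hx
    by_cases hR : R x x
    · rw [hcR x hx hR, inter_comm]
      exact hdR x
    · have h0 : eSize ρ {y | F y x} (h x) ≤ 3 * c * eSize ρ (A ∩ {y | F y x}) (h x) := by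
        calc eSize ρ {y | F y x} (h x)
            ≤ eSize ρ ({y | G (h x) y} ∪ {l | E (h x) l ∧ Opt E ρ G R l (h x)}) (h x) :=
              eSize_mono ρ (hcsub x hx hR) _
          _ ≤ sz ρ G (h x) (h x) + sz ρ G (h x) (h x) :=
              (eSize_union_le ρ _ _ _).trans (by gcongr; exacts [le_rfl, (hof x hx hR).2])
          _ = 2 * sz ρ G (h x) (h x) := (two_mul _).symm
          _ ≤ 3 * sz ρ G (h x) (h x) := by gcongr; norm_num
          _ ≤ 3 * (c * eSize ρ ({y | G (h x) y} ∩ A) (h x)) := by gcongr; exact hdG (h x)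
          _ ≤ 3 * (c * eSize ρ (A ∩ {y | F y x}) (h x)) := by
              gcongr
              refine eSize_mono ρ ?_ _
              rintro y ⟨h1, h2⟩
              exact ⟨h2, hcsup x hx hR h1⟩
          _ = _ := by ring
      have hEy : ∀ y ∈ {y | F y x}, E (h x) y := fun y hy =>
        hE.1.trans (hE.1.symm (hhE x)) (hE.1.symm (hFE _ _ hy))
      exact eSize_le_base hE hρ (hE.1.symm (hhE x)) hEy (fun y hy => hEy y hy.2) _ h0

end CC


section FN
variable [MeasurableSpace X] {E : X → X → Prop} {ρ : X → X → ℝ}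

/-- points whose class meets `V` in a set of positive finite size -/
def BV (E : X → X → Prop) (ρ : X → X → ℝ) (V : X → Prop) : Set X :=
  {x | eSize ρ {y | E x y ∧ V y} x ≠ 0 ∧ eSize ρ {y | E x y ∧ V y} x ≠ ⊤}

theorem bv_meas [StandardBorelSpace X] {g : ℕ → X → X} (hg : Enum E g) (hE : IsCBER E)
    (hρ : IsCocycle E ρ) {V : X → Prop} (hV : Measurable V) : MeasurableSet (BV E ρ V) := by
  have hEm : Measurable fun p : X × X => E p.1 p.2 := measurableSet_setOfPred.1 hE.2.1
  have hm : Measurable fun x => eSize ρ {y | E x y ∧ V y} x :=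
    mSize hg hρ (H := fun x y => E x y ∧ V y) (hEm.and (hV.comp measurable_snd))
      measurable_id measurable_id fun _ _ h => h.1
  exact (hm (measurableSet_singleton 0).compl).inter (hm (measurableSet_singleton ⊤).compl)

theorem bv_inv (hE : IsCBER E) (hρ : IsCocycle E ρ) {V : X → Prop} :
    EInvariant E (BV E ρ V) := by
  rintro x y hxy ⟨h1, h2⟩
  have e : {z | E y z ∧ V z} = {z | E x z ∧ V z} := by
    ext z
    exact ⟨fun h => ⟨hE.1.trans hxy h.1, h.2⟩, fun h => ⟨hE.1.trans (hE.1.symm hxy) h.1, h.2⟩⟩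
  have hb := eSize_base hE hρ (Y := {z | E x z ∧ V z}) hxy fun z hz => hz.1
  refine ⟨?_, ?_⟩
  · rw [e, hb]
    exact mul_ne_zero h1 (coc_pos hρ hxy).ne'
  · rw [e, hb]
    exact ENNReal.mul_ne_top h2 ENNReal.ofReal_ne_top

theorem smooth_union [StandardBorelSpace X] {g : ℕ → X → X} (hg : Enum E g) (hE : IsCBER E)
    (hρ : IsCocycle E ρ) {V : ℕ → X → Prop} (hV : ∀ j, Measurable (V j)) :
    SmoothOn E ρ (⋃ j, BV E ρ (V j)) := by
  classical
  let K : X → Prop := fun y => ∃ j, V j y ∧ y ∈ BV E ρ (V j) ∧ ∀ i, i < j → y ∉ BV E ρ (V i)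
  have hB : ∀ j, Measurable fun y => y ∈ BV E ρ (V j) := fun j =>
    measurableSet_setOfPred.1 (bv_meas hg hE hρ (hV j))
  have hK : Measurable K := Measurable.exists fun j => (hV j).and ((hB j).and
    (Measurable.forall fun i => Measurable.forall fun _ => (hB i).not))
  have key : ∀ x ∈ ⋃ j, BV E ρ (V j), ∃ j, x ∈ BV E ρ (V j) ∧
      {y | E x y ∧ K y} = {y | E x y ∧ V j y} := by
    intro x hx
    have hex : ∃ j, x ∈ BV E ρ (V j) := mem_iUnion.1 hx
    refine ⟨Nat.find hex, Nat.find_spec hex, ?_⟩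
    ext y
    refine and_congr_right fun hxy => ?_
    constructor
    · rintro ⟨j, h1, h2, h3⟩
      have hj : x ∈ BV E ρ (V j) := bv_inv hE hρ (hE.1.symm hxy) h2
      have : Nat.find hex = j := by
        rw [Nat.find_eq_iff]
        exact ⟨hj, fun i hi hi' => h3 i hi (bv_inv hE hρ hxy hi')⟩
      rw [this]; exact h1
    · intro h
      exact ⟨_, h, bv_inv hE hρ hxy (Nat.find_spec hex), fun i hi hi' =>
        Nat.find_min hex hi (bv_inv hE hρ (hE.1.symm hxy) hi')⟩
  refine smooth_of_fin hE hρ hg hK ?_ ?_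
  · intro x hx
    obtain ⟨j, h1, h2⟩ := key x hx
    rw [h2]; exact h1.1
  · intro x hx
    obtain ⟨j, h1, h2⟩ := key x hx
    rw [h2]; exact h1.2

/-- small leftover points -/
def LS (E : X → X → Prop) (ρ : X → X → ℝ) (G R : X → X → Prop) (l : X) : Prop :=
  LL G R l ∧ ∀ p, E l p → (LP G R p → 1 ≤ sz ρ G p l)

theorem ls_meas [StandardBorelSpace X] {g : ℕ → X → X} (hg : Enum E g)
    (hρ : IsCocycle E ρ) {G R : X → X → Prop} (hG : PER E G) (hs : Step E ρ G R) :
    Measurable (LS E ρ G R) := by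
  refine (ll_meas hG hs).and ?_
  refine mAll hg (Q := fun l p => (LP G R p → 1 ≤ sz ρ G p l)) ?_ measurable_id
  exact ((lp_meas hG hs).comp measurable_snd).imp (measurableSet_setOfPred.1
    (measurableSet_le measurable_const (sz_meas hg hρ hG measurable_snd measurable_fst)))

theorem exists_seq [StandardBorelSpace X] {g : ℕ → X → X} (hg : Enum E g) (hE : IsCBER E)
    (hρ : IsCocycle E ρ) {A : Set X} (hA : MeasurableSet A) :
    ∃ G : ℕ → X → X → Prop, (∀ n, PER E (G n)) ∧ (∀ x y, G 0 x y ↔ x = y ∧ x ∈ A) ∧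
      (∀ n, Step E ρ (G n) (G (n + 1))) ∧ ∀ n, Dens ρ A (G n) (3 ^ n) := by
  classical
  have h0 : PER E (fun x y => x = y ∧ x ∈ A) := by
    refine ⟨?_, ?_, ?_, ?_, ?_⟩
    · exact (meas_eq measurable_fst measurable_snd).and
        ((measurableSet_setOfPred.1 (show MeasurableSet {x | x ∈ A} from hA)).comp measurable_fst)
    · rintro x y ⟨rfl, h⟩; exact ⟨rfl, h⟩
    · rintro x y z ⟨rfl, h⟩ ⟨rfl, _⟩; exact ⟨rfl, h⟩
    · rintro x y ⟨rfl, h⟩; exact hE.1.refl x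
    · intro y
      refine (finite_singleton y).subset ?_
      rintro z ⟨rfl, _⟩; rfl
  choose nx hnx using fun G : {G : X → X → Prop // PER E G} => step hE hρ hg G.2
  let S : ℕ → {G : X → X → Prop // PER E G} := fun n =>
    Nat.rec ⟨_, h0⟩ (fun _ G => ⟨nx G, (hnx G).per⟩) n
  have hst : ∀ n, Step E ρ (S n).1 (S (n + 1)).1 := fun n => hnx (S n)
  refine ⟨fun n => (S n).1, fun n => (S n).2, fun x y => Iff.rfl, hst, fun n => ?_⟩
  induction n with
  | zero =>
    intro y
    rw [pow_zero, one_mul]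
    refine eSize_mono ρ ?_ y
    rintro z ⟨rfl, h⟩
    exact ⟨⟨rfl, h⟩, h⟩
  | succ n ih =>
    rw [pow_succ, mul_comm]
    exact step_dens hE hρ (S n).2 (hst n) ih

theorem main_aux [StandardBorelSpace X]
    (E : X → X → Prop) (hE : IsCBER E)
    (ρ : X → X → ℝ) (hρ : IsCocycle E ρ)
    (A : Set X) (hA : MeasurableSet A) (hAcomp : ∀ x : X, ∃ y ∈ A, E x y) :
    ∃ B C D : Set X,
      MeasurableSet B ∧ EInvariant E B ∧
      MeasurableSet C ∧ EInvariant E C ∧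
      MeasurableSet D ∧ EInvariant E D ∧
      B ∪ C ∪ D = Set.univ ∧
      SmoothOn E ρ B ∧
      HasSigmaPosDensityOn E ρ (A ∩ C) C ∧
      (∃ (F : X → X → Prop) (hF : Equivalence F), IsFinSubequivOn E D F ∧
        ∃ φ : Quotient (Setoid.mk F hF) → Quotient (Setoid.mk F hF),
          Measurable φ ∧ (∀ C', (φ ⁻¹' {C'}).Finite) ∧
          QuotCompressionOn E ρ D (Setoid.mk F hF) φ) := by
  classical
  obtain ⟨g, hgm, hgi⟩ := ln_functions hE
  have hg : Enum E g := ⟨hgm, hgi⟩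
  obtain ⟨G, hG, hG0, hs, hd⟩ := exists_seq hg hE hρ hA
  obtain ⟨e, he⟩ := exists_surjective_nat (ℕ × Bool)
  let V' : ℕ × Bool → X → Prop := fun q => if q.2 then LP (G q.1) (G (q.1 + 1)) else
    LS E ρ (G q.1) (G (q.1 + 1))
  have hV' : ∀ q, Measurable (V' q) := by
    rintro ⟨n, b⟩
    cases b
    · exact ls_meas hg hρ (hG n) (hs n)
    · exact lp_meas (hG n) (hs n)
  let V : ℕ → X → Prop := fun j => V' (e j)
  have hV : ∀ j, Measurable (V j) := fun j => hV' _
  set B : Set X := ⋃ j, BV E ρ (V j) with hB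
  have hB1 : ∀ n, BV E ρ (LP (G n) (G (n + 1))) ⊆ B := by
    intro n x hx
    obtain ⟨j, hj⟩ := he (n, true)
    refine mem_iUnion.2 ⟨j, ?_⟩
    simp only [V, hj]
    exact hx
  have hB2 : ∀ n, BV E ρ (LS E ρ (G n) (G (n + 1))) ⊆ B := by
    intro n x hx
    obtain ⟨j, hj⟩ := he (n, false)
    refine mem_iUnion.2 ⟨j, ?_⟩
    simp only [V, hj]
    exact hx
  have hBm : MeasurableSet B := MeasurableSet.iUnion fun j => bv_meas hg hE hρ (hV j)
  have hBi : EInvariant E B := by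
    intro x y hxy hx
    obtain ⟨j, hj⟩ := mem_iUnion.1 hx
    exact mem_iUnion.2 ⟨j, bv_inv hE hρ hxy hj⟩
  let I : ℕ → Set X := fun n => {x | ∃ y, E x y ∧ LP (G n) (G (n + 1)) y}
  have hIm : ∀ n, MeasurableSet (I n) := fun n => measurableSet_setOfPred.2
    (mEx hg (Q := fun _ y => LP (G n) (G (n + 1)) y)
      ((lp_meas (hG n) (hs n)).comp measurable_snd) measurable_id)
  have hIi : ∀ n, EInvariant E (I n) := by
    rintro n x y hxy ⟨z, h1, h2⟩
    exact ⟨z, hE.1.trans (hE.1.symm hxy) h1, h2⟩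
  let Cn : ℕ → Set X := fun n => I n \ B
  have hCm : ∀ n, MeasurableSet (Cn n) := fun n => (hIm n).diff hBm
  have hCi : ∀ n, EInvariant E (Cn n) := by
    rintro n x y hxy ⟨h1, h2⟩
    exact ⟨hIi n hxy h1, fun h => h2 (hBi (hE.1.symm hxy) h)⟩
  have hbig : ∀ n, ∀ l ∈ Cn n, LL (G n) (G (n + 1)) l →
      ∃ p, E l p ∧ LP (G n) (G (n + 1)) p ∧ 1 ≤ sz ρ (G n) p l := by
    rintro n l ⟨⟨q, hq1, hq2⟩, hlB⟩ hl
    by_contra hcon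
    push Not at hcon
    have h1 := v1 hE hρ (hG n) (hs n) hl hcon
    refine hlB (hB1 n ⟨?_, ?_⟩)
    · exact (eSize_pos hρ (Y := {y | E l y ∧ LP (G n) (G (n + 1)) y}) (y := q) ⟨hq1, hq2⟩ (hE.1.symm hq1)).ne'
    · exact ne_top_of_le_ne_top (by norm_num) h1
  have hsm : ∀ n, ∀ l ∈ Cn n, LL (G n) (G (n + 1)) l →
      ∃ p, E l p ∧ LP (G n) (G (n + 1)) p ∧ sz ρ (G n) p l < 1 := by
    rintro n l ⟨⟨q, hq1, hq2⟩, hlB⟩ hl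
    by_contra hcon
    push Not at hcon
    refine hlB (hB2 n ⟨?_, ?_⟩)
    · exact (eSize_pos hρ (Y := {y | E l y ∧ LS E ρ (G n) (G (n + 1)) y}) (y := l) ⟨hE.1.refl l, hl, hcon⟩ (hE.1.refl l)).ne'
    · have h2 := v2 hE hρ (hG n) (hs n) hq2
      have h3 : eSize ρ {y | E l y ∧ LS E ρ (G n) (G (n + 1)) y} q ≤ sz ρ (G n) q q := by
        refine (eSize_mono ρ ?_ q).trans h2
        rintro y ⟨a1, a2, a3⟩
        have hyq := hE.1.trans (hE.1.symm a1) hq1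
        exact ⟨hE.1.symm hyq, a2, (one_le_base hE hρ (hG n) hyq hyq).1 (a3 q hyq hq2)⟩
      rw [eSize_base hE hρ (z := q) (hE.1.symm hq1)
        fun y hy => hE.1.trans (hE.1.symm hq1) hy.1]
      exact ENNReal.mul_ne_top (ne_top_of_le_ne_top (eSize_finite ρ ((hG n).fin q) q) h3)
        ENNReal.ofReal_ne_top
  refine ⟨B, ⋃ n, Cn n, DSet E G, hBm, hBi, MeasurableSet.iUnion hCm, ?_, dset_meas hg hG,
    dset_inv hE, ?_, smooth_union hg hE hρ hV, ?_, d_part hE hρ hg hAcomp hG hG0 hs⟩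
  · intro x y hxy hx
    obtain ⟨n, hn⟩ := mem_iUnion.1 hx
    exact mem_iUnion.2 ⟨n, hCi n hxy hn⟩
  · refine eq_univ_of_forall fun x => ?_
    by_cases hx : x ∈ DSet E G
    · exact Or.inr hx
    · left
      by_cases hxB : x ∈ B
      · exact Or.inl hxB
      · right
        have : ∃ n y, E x y ∧ G n y y ∧ ¬ G (n + 1) y y := by
          by_contra hcon
          push Not at hcon
          exact hx fun n y h1 h2 => hcon n y h1 h2
        obtain ⟨n, y, h1, h2⟩ := this
        exact mem_iUnion.2 ⟨n, ⟨y, h1, h2⟩, hxB⟩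
  · refine ⟨Cn, hCm, fun n => subset_iUnion Cn n, fun n x hx y _ hxy => hCi n hxy hx, rfl, ?_⟩
    intro n
    have hd1 : Dens ρ A (G (n + 1)) (3 * 3 ^ n) := by
      have := hd (n + 1)
      rwa [pow_succ, mul_comm] at this
    obtain ⟨F, hF, hFd⟩ := c_part hg hE hρ (hG n) (hs n) (hCm n) (hCi n) (hd n) hd1
      (hbig n) (hsm n)
    refine ⟨(3 * 3 ^ n)⁻¹, by positivity, F, hF, fun x hx => ?_⟩
    have hsub : ∀ y, F y x → E y x ∧ y ∈ Cn n := by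
      intro y hy
      rcases hF.2.2.1 hy with rfl | h
      · exact ⟨hE.1.refl _, hx⟩
      · exact ⟨h.1, h.2.1⟩
    have hset : A ∩ (⋃ n, Cn n) ∩ Cn n ∩ {y | F y x} = A ∩ {y | F y x} := by
      ext y
      constructor
      · rintro ⟨⟨⟨h1, _⟩, _⟩, h2⟩
        exact ⟨h1, h2⟩
      · rintro ⟨h1, h2⟩
        have := (hsub y h2).2
        exact ⟨⟨⟨h1, mem_iUnion.2 ⟨n, this⟩⟩, this⟩, h2⟩
    have hfin : {y | F y x}.Finite := by
      refine (hF.2.2.2 x).subset fun y hy => hF.1.symm hy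
    have hpos : eSize ρ {y | F y x} x ≠ 0 :=
      (eSize_pos hρ (Y := {y | F y x}) (y := x) (hF.1.refl x) (hE.1.refl x)).ne'
    have hk : ENNReal.ofReal ((3 * 3 ^ n)⁻¹) = (3 * 3 ^ n : ℝ≥0∞)⁻¹ := by
      rw [ENNReal.ofReal_inv_of_pos (by positivity), ENNReal.ofReal_mul (by norm_num),
        ENNReal.ofReal_pow (by norm_num)]
      simp
    have hk0 : (3 * 3 ^ n : ℝ≥0∞) ≠ 0 := by simp
    have hkt : (3 * 3 ^ n : ℝ≥0∞) ≠ ⊤ := by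
      exact ENNReal.mul_ne_top (by simp) (ENNReal.pow_ne_top (by simp))
    rw [hset, relSize, hk, ENNReal.le_div_iff_mul_le (Or.inl hpos)
      (Or.inl (eSize_finite ρ hfin x))]
    calc (3 * 3 ^ n : ℝ≥0∞)⁻¹ * eSize ρ {y | F y x} x
        ≤ (3 * 3 ^ n : ℝ≥0∞)⁻¹ * (3 * 3 ^ n * eSize ρ (A ∩ {y | F y x}) x) := by
          gcongr; exact hFd x hx
      _ = eSize ρ (A ∩ {y | F y x}) x := by
          rw [← mul_assoc, ENNReal.inv_mul_cancel hk0 hkt, one_mul]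

end FN

/-- `X` decomposes into an `E`-invariant Borel set on which `ρ` is smooth, one on which
`A` has σ-positive `ρ`-density, and one admitting a finite-to-one Borel compression of the
quotient of (the restriction of) `ρ` by a finite Borel subequivalence relation. -/
theorem stmt2 [MeasurableSpace X] [StandardBorelSpace X]
    (E : X → X → Prop) (hE : IsCBER E)
    (ρ : X → X → ℝ) (hρ : IsCocycle E ρ)
    (A : Set X) (hA : MeasurableSet A) (hAcomp : ∀ x : X, ∃ y ∈ A, E x y) :
    ∃ B C D : Set X,
      MeasurableSet B ∧ EInvariant E B ∧
      MeasurableSet C ∧ EInvariant E C ∧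
      MeasurableSet D ∧ EInvariant E D ∧
      B ∪ C ∪ D = Set.univ ∧
      SmoothOn E ρ B ∧
      HasSigmaPosDensityOn E ρ (A ∩ C) C ∧
      (∃ (F : X → X → Prop) (hF : Equivalence F), IsFinSubequivOn E D F ∧
        ∃ φ : Quotient (Setoid.mk F hF) → Quotient (Setoid.mk F hF),
          Measurable φ ∧ (∀ C', (φ ⁻¹' {C'}).Finite) ∧
          QuotCompressionOn E ρ D (Setoid.mk F hF) φ) := by
  exact main_aux E hE ρ hρ A hA hAcomp

end CocycleNadkarni
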